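/- Consider the ODE h W' = blockdiag(A_{11}, A_{22}) W + h^p Θ W with p ≥ 1, where A_{11}, A_{22}, Θ are matrix-valued functions uniformly analytic in x in a complex neighborhood of a point x_* ∈ ℝ and continuous in h on (0,h₀], with A_{11}(x_*,h) and A_{22}(x_*,h) having no eigenvalues in common (uniformly in h). Then there exists a coordinate change W = T(x,h) Z with T = [[I, h^p α_{12}],[h^p α_{21}, I]] such that h Z' = blockdiag(A_{11} + h^p β_{11}, A_{22} + h^p β_{22}) Z, where α_{12}, α_{21}, β_{11}, β_{22} are uniformly analytic in x on a (possibly smaller) complex neighborhood of x_* and continuous in h on a neighborhood of h = 0, uniformly bounded as h → 0⁺. -/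

import Mathlib

open Set

attribute [local instance] Matrix.linftyOpNormedAddCommGroup Matrix.linftyOpNormedRing
  Matrix.linftyOpNormedAlgebra Matrix.linftyOpNormedSpace

section aux
open PowerSeries

/-- Catalan weights. -/
noncomputable def wt (τ : ℝ) (k : ℕ) : ℝ := (catalan k : ℝ) * τ ^ k

lemma catalan_rec (n : ℕ) : (n + 2) * catalan (n + 1) = (4 * n + 2) * catalan n := by
  have h1 := succ_mul_catalan_eq_centralBinom n
  have h2 := succ_mul_catalan_eq_centralBinom (n + 1)
  have h3 := Nat.succ_mul_centralBinom_succ n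
  rw [← h1, ← h2] at h3
  have : (n + 1) * ((n + 2) * catalan (n + 1)) = (n + 1) * ((4 * n + 2) * catalan n) := by
    calc _ = (n + 1) * ((n + 1 + 1) * catalan (n + 1)) := by ring
      _ = _ := by rw [h3]; ring
  exact Nat.eq_of_mul_eq_mul_left (Nat.succ_pos n) this

lemma catalan_succ_le (n : ℕ) : catalan (n + 1) ≤ 4 * catalan n := by
  have := catalan_rec n
  nlinarith [Nat.zero_le (catalan n)]

lemma catalan_le_succ (n : ℕ) : catalan n ≤ catalan (n + 1) := by
  rcases n with _ | n
  · simp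
  · have := catalan_rec (n + 1)
    nlinarith [Nat.zero_le (catalan (n+1))]

lemma catalan_one_le (n : ℕ) : 1 ≤ catalan n := by
  induction n with
  | zero => simp
  | succ n ih => exact ih.trans (catalan_le_succ n)

lemma catalan_le_pow (n : ℕ) : catalan n ≤ 4 ^ n := by
  induction n with
  | zero => simp
  | succ n ih => rw [pow_succ]; linarith [catalan_succ_le n]

lemma wt_nonneg {τ : ℝ} (hτ : 0 ≤ τ) (k : ℕ) : 0 ≤ wt τ k := by unfold wt; positivity

lemma wt_conv {τ : ℝ} (hτ : 0 ≤ τ) (k : ℕ) :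
    ∑ p ∈ Finset.HasAntidiagonal.antidiagonal k, wt τ p.1 * wt τ p.2 ≤ 4 * wt τ k := by
  have h1 : ∑ p ∈ Finset.HasAntidiagonal.antidiagonal k, wt τ p.1 * wt τ p.2
      = (catalan (k + 1) : ℝ) * τ ^ k := by
    rw [catalan_succ']
    push_cast
    rw [Finset.sum_mul]
    refine Finset.sum_congr rfl fun p hp => ?_
    rw [← Finset.HasAntidiagonal.mem_antidiagonal.mp hp, pow_add]
    unfold wt; ring
  rw [h1]; unfold wt
  have : (catalan (k + 1) : ℝ) ≤ 4 * catalan k := by exact_mod_cast catalan_succ_le k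
  nlinarith [pow_nonneg hτ k]

lemma wt_succ_le {τ : ℝ} (hτ : 0 ≤ τ) (k : ℕ) : wt τ (k + 1) ≤ 4 * τ * wt τ k := by
  unfold wt
  have : (catalan (k + 1) : ℝ) ≤ 4 * catalan k := by exact_mod_cast catalan_succ_le k
  have h2 := pow_nonneg hτ (k + 1)
  calc _ ≤ (4 * catalan k : ℝ) * τ ^ (k + 1) := by gcongr
    _ = _ := by ring

lemma wt_le_succ {τ : ℝ} (hτ : 0 ≤ τ) (k : ℕ) : τ * wt τ k ≤ wt τ (k + 1) := by
  unfold wt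
  have : (catalan k : ℝ) ≤ catalan (k + 1) := by exact_mod_cast catalan_le_succ k
  have h2 := pow_nonneg hτ (k + 1)
  calc _ = (catalan k : ℝ) * τ ^ (k + 1) := by ring
    _ ≤ _ := by gcongr

lemma wt_mono {τ τ' : ℝ} (hτ : 0 ≤ τ) (h : τ ≤ τ') (k : ℕ) : wt τ k ≤ wt τ' k := by
  unfold wt; gcongr

lemma wt_le_pow {τ : ℝ} (hτ : 0 ≤ τ) (k : ℕ) : wt τ k ≤ (4 * τ) ^ k := by
  unfold wt
  rw [mul_pow]
  have : (catalan k : ℝ) ≤ 4 ^ k := by exact_mod_cast catalan_le_pow k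
  gcongr

lemma pow_le_wt {τ : ℝ} (hτ : 0 ≤ τ) (k : ℕ) : τ ^ k ≤ wt τ k := by
  unfold wt
  have : (1 : ℝ) ≤ catalan k := by exact_mod_cast catalan_one_le k
  nlinarith [pow_nonneg hτ k]

section ring
variable {R : Type*} [NormedRing R]

def Bd (τ M : ℝ) (a : R⟦X⟧) : Prop := ∀ k, ‖coeff k a‖ ≤ M * wt τ k

lemma Bd.add {τ M M' : ℝ} {a b : R⟦X⟧} (ha : Bd τ M a) (hb : Bd τ M' b) : Bd τ (M + M') (a + b) := by
  intro k
  rw [map_add]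
  linarith [norm_add_le (coeff k a) (coeff k b), ha k, hb k]

lemma Bd.sub {τ M M' : ℝ} {a b : R⟦X⟧} (ha : Bd τ M a) (hb : Bd τ M' b) : Bd τ (M + M') (a - b) := by
  intro k
  rw [map_sub]
  linarith [norm_sub_le (coeff k a) (coeff k b), ha k, hb k]

lemma Bd.mul {τ M M' : ℝ} (hτ : 0 ≤ τ) (hM : 0 ≤ M) (hM' : 0 ≤ M') {a b : R⟦X⟧}
    (ha : Bd τ M a) (hb : Bd τ M' b) : Bd τ (4 * M * M') (a * b) := by
  intro k
  rw [coeff_mul]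
  calc _ ≤ ∑ p ∈ Finset.HasAntidiagonal.antidiagonal k, ‖coeff p.1 a * coeff p.2 b‖ := norm_sum_le _ _
    _ ≤ ∑ p ∈ Finset.HasAntidiagonal.antidiagonal k, (M * M') * (wt τ p.1 * wt τ p.2) := by
      refine Finset.sum_le_sum fun p _ => (norm_mul_le _ _).trans ?_
      have h1 := ha p.1
      have h2 := hb p.2
      calc _ ≤ (M * wt τ p.1) * (M' * wt τ p.2) := by
            have := wt_nonneg hτ p.1
            gcongr
        _ = _ := by ring
    _ ≤ (M * M') * (4 * wt τ k) := by
      rw [← Finset.mul_sum]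
      have := wt_conv hτ k
      gcongr
    _ = _ := by ring

lemma Bd.mono {τ τ' M M' : ℝ} (hτ : 0 ≤ τ) (hM : 0 ≤ M) (h : τ ≤ τ') (h' : M ≤ M') {a : R⟦X⟧}
    (ha : Bd τ M a) : Bd τ' M' a := by
  intro k
  refine (ha k).trans ?_
  have := wt_mono hτ h k
  have := wt_nonneg hτ k
  have := hM.trans h'
  gcongr

lemma Bd.zero {τ : ℝ} : Bd τ 0 (0 : R⟦X⟧) := by intro k; simp

noncomputable def Gm (F B N a : R⟦X⟧) : R⟦X⟧ := F + (B * a - a * B) - a * N * a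

lemma Gm_bd {τ C η M : ℝ} (hτ : 0 ≤ τ) (hη : 0 ≤ η) (hM : 0 ≤ M) {F B N a : R⟦X⟧}
    (hF : Bd τ C F) (hB : Bd τ η B) (hN : Bd τ η N) (ha : Bd τ M a) :
    Bd τ (C + 8 * η * M + 16 * η * M ^ 2) (Gm F B N a) := by
  have := (hF.add ((hB.mul hτ hη hM ha).sub (ha.mul hτ hM hη hB))).sub
    ((ha.mul hτ hM hη hN).mul hτ (by positivity) hM ha)
  unfold Gm
  convert this using 1
  ring

lemma Gm_sub_bd {τ η M D : ℝ} (hτ : 0 ≤ τ) (hη : 0 ≤ η) (hM : 0 ≤ M) (hD : 0 ≤ D)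
    {F B N a b : R⟦X⟧} (hB : Bd τ η B) (hN : Bd τ η N) (ha : Bd τ M a) (hb : Bd τ M b)
    (hab : Bd τ D (a - b)) :
    Bd τ ((8 * η + 32 * η * M) * D) (Gm F B N a - Gm F B N b) := by
  have e : Gm F B N a - Gm F B N b
      = B * (a - b) - (a - b) * B - (a - b) * N * a - b * N * (a - b) := by
    unfold Gm; noncomm_ring
  rw [e]
  have := (((hB.mul hτ hη hD hab).sub (hab.mul hτ hD hη hB)).sub
    ((hab.mul hτ hD hη hN).mul hτ (by positivity) hM ha)).sub
    ((hb.mul hτ hM hη hN).mul hτ (by positivity) hD hab)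
  convert this using 1
  ring

lemma Gm_off {s F B N a : R⟦X⟧} (hF : s * F = -(F * s)) (hB : s * B = B * s)
    (hN : s * N = -(N * s)) (ha : s * a = -(a * s)) : s * Gm F B N a = -(Gm F B N a * s) := by
  unfold Gm
  have e1 : s * (B * a) = -(B * a * s) := by
    rw [← mul_assoc, hB, mul_assoc, ha]; noncomm_ring
  have e2 : s * (a * B) = -(a * B * s) := by
    rw [← mul_assoc, ha, neg_mul, mul_assoc, hB]; noncomm_ring
  have e3 : s * (a * N * a) = -(a * N * a * s) := by
    calc s * (a * N * a) = (s * a) * N * a := by noncomm_ring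
      _ = -(a * (s * N) * a) := by rw [ha]; noncomm_ring
      _ = a * N * (s * a) := by rw [hN]; noncomm_ring
      _ = _ := by rw [ha]; noncomm_ring
  rw [mul_sub, mul_add, mul_sub, hF, e1, e2, e3]
  noncomm_ring

/-- coefficientwise continuity of a family of power series -/
def CC (S : Set ℝ) (a : ℝ → R⟦X⟧) : Prop := ∀ k, ContinuousOn (fun h => coeff k (a h)) S

lemma CC.mul {S : Set ℝ} {a b : ℝ → R⟦X⟧} (ha : CC S a) (hb : CC S b) :
    CC S (fun h => a h * b h) := by
  intro k
  simp only [coeff_mul]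
  exact continuousOn_finsetSum _ fun p _ => (ha p.1).mul (hb p.2)

lemma CC.add {S : Set ℝ} {a b : ℝ → R⟦X⟧} (ha : CC S a) (hb : CC S b) :
    CC S (fun h => a h + b h) := by
  intro k
  simp only [map_add]
  exact (ha k).add (hb k)

lemma CC.sub {S : Set ℝ} {a b : ℝ → R⟦X⟧} (ha : CC S a) (hb : CC S b) :
    CC S (fun h => a h - b h) := by
  intro k
  simp only [map_sub]
  exact (ha k).sub (hb k)

lemma CC.Gm {S : Set ℝ} {F B N a : ℝ → R⟦X⟧} (hF : CC S F) (hB : CC S B) (hN : CC S N)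
    (ha : CC S a) : CC S (fun h => Gm (F h) (B h) (N h) (a h)) :=
  (hF.add ((hB.mul ha).sub (ha.mul hB))).sub ((ha.mul hN).mul ha)

variable [NormedAlgebra ℂ R]

/-- tapered map -/
noncomputable def Ph (J : R →L[ℂ] R) (F B N : R⟦X⟧) (t : ℕ → ℝ) (a : R⟦X⟧) : R⟦X⟧ :=
  PowerSeries.mk fun k => J ((t k : ℂ) • coeff (k + 1) a - coeff k (Gm F B N a))

variable {J : R →L[ℂ] R} {F B N : R⟦X⟧} {t : ℕ → ℝ} {K C η ε τ M : ℝ}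

lemma shift_bd (hτ : 0 ≤ τ) (hε : 0 ≤ ε) {D : ℝ} (hD : 0 ≤ D)
    (ht : ∀ k, |t k| ≤ ε) {a : R⟦X⟧} (ha : Bd τ D a) (k : ℕ) :
    ‖(t k : ℂ) • coeff (k + 1) a‖ ≤ ε * (4 * τ) * D * wt τ k := by
  rw [norm_smul, Complex.norm_real, Real.norm_eq_abs]
  calc _ ≤ ε * (D * (4 * τ * wt τ k)) := by
        have := ht k
        have := (ha (k+1)).trans (mul_le_mul_of_nonneg_left (wt_succ_le hτ k) hD)
        gcongr
    _ = _ := by ring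

lemma Ph_bd (hτ : 0 ≤ τ) (hη : 0 ≤ η) (hM : 0 ≤ M) (hε : 0 ≤ ε) (hK : 0 ≤ K)
    (hJ : ‖J‖ ≤ K) (hF : Bd τ C F) (hB : Bd τ η B) (hN : Bd τ η N) (ht : ∀ k, |t k| ≤ ε)
    (c1 : K * (ε * (4 * τ) * M + (C + 8 * η * M + 16 * η * M ^ 2)) ≤ M)
    {a : R⟦X⟧} (ha : Bd τ M a) : Bd τ M (Ph J F B N t a) := by
  intro k
  rw [Ph, coeff_mk]
  have h1 := Gm_bd hτ hη hM hF hB hN ha k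
  have h2 := shift_bd hτ hε hM ht ha k
  have h3 := norm_sub_le ((t k : ℂ) • coeff (k + 1) a) (coeff k (Gm F B N a))
  calc _ ≤ K * ‖(t k : ℂ) • coeff (k + 1) a - coeff k (Gm F B N a)‖ := J.le_of_opNorm_le hJ _
    _ ≤ K * ((ε * (4 * τ) * M + (C + 8 * η * M + 16 * η * M ^ 2)) * wt τ k) := by
      gcongr; linarith
    _ ≤ _ := by
      rw [← mul_assoc]
      have := wt_nonneg hτ k
      gcongr

lemma Ph_sub_bd (hτ : 0 ≤ τ) (hη : 0 ≤ η) (hM : 0 ≤ M) (hε : 0 ≤ ε) (hK : 0 ≤ K)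
    (hJ : ‖J‖ ≤ K) (hB : Bd τ η B) (hN : Bd τ η N) (ht : ∀ k, |t k| ≤ ε)
    (c2 : K * (ε * (4 * τ) + (8 * η + 32 * η * M)) ≤ 1 / 2)
    {a b : R⟦X⟧} (ha : Bd τ M a) (hb : Bd τ M b) {D : ℝ} (hD : 0 ≤ D) (hab : Bd τ D (a - b)) :
    Bd τ (D / 2) (Ph J F B N t a - Ph J F B N t b) := by
  intro k
  rw [map_sub, Ph, Ph, coeff_mk, coeff_mk, ← map_sub J]
  have h1 := Gm_sub_bd (F := F) hτ hη hM hD hB hN ha hb hab k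
  have h2 := shift_bd hτ hε hD ht hab k
  have e : (t k : ℂ) • coeff (k + 1) a - coeff k (Gm F B N a)
      - ((t k : ℂ) • coeff (k + 1) b - coeff k (Gm F B N b))
      = (t k : ℂ) • coeff (k + 1) (a - b) - coeff k (Gm F B N a - Gm F B N b) := by
    rw [map_sub, map_sub, smul_sub]; abel
  rw [e]
  have h3 := norm_sub_le ((t k : ℂ) • coeff (k + 1) (a - b)) (coeff k (Gm F B N a - Gm F B N b))
  calc _ ≤ K * ‖(t k : ℂ) • coeff (k + 1) (a - b) - coeff k (Gm F B N a - Gm F B N b)‖ :=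
        J.le_of_opNorm_le hJ _
    _ ≤ K * ((ε * (4 * τ) * D + (8 * η + 32 * η * M) * D) * wt τ k) := by
      gcongr; linarith
    _ = K * (ε * (4 * τ) + (8 * η + 32 * η * M)) * (D * wt τ k) := by ring
    _ ≤ 1 / 2 * (D * wt τ k) := by
      have := wt_nonneg hτ k
      gcongr
    _ = _ := by ring

lemma tapered [CompleteSpace R] {S : Set ℝ} (J : ℝ → R →L[ℂ] R) (F B N : ℝ → R⟦X⟧)
    (t : ℝ → ℕ → ℝ)
    (hτ : 0 ≤ τ) (hη : 0 ≤ η) (hM : 0 ≤ M) (hε : 0 ≤ ε) (hK : 0 ≤ K)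
    (hJ : ∀ h ∈ S, ‖J h‖ ≤ K) (hF : ∀ h ∈ S, Bd τ C (F h)) (hB : ∀ h ∈ S, Bd τ η (B h))
    (hN : ∀ h ∈ S, Bd τ η (N h)) (ht : ∀ h ∈ S, ∀ k, |t h k| ≤ ε)
    (c1 : K * (ε * (4 * τ) * M + (C + 8 * η * M + 16 * η * M ^ 2)) ≤ M)
    (c2 : K * (ε * (4 * τ) + (8 * η + 32 * η * M)) ≤ 1 / 2)
    (cJ : ContinuousOn J S) (cF : CC S F) (cB : CC S B) (cN : CC S N)
    (ct : ∀ k, ContinuousOn (fun h => t h k) S) :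
    ∃ a : ℝ → R⟦X⟧, (∀ h ∈ S, Bd τ M (a h)) ∧ CC S a ∧
      ∀ h ∈ S, Ph (J h) (F h) (B h) (N h) (t h) (a h) = a h := by
  let x : ℕ → ℝ → R⟦X⟧ := fun n h => (Ph (J h) (F h) (B h) (N h) (t h))^[n] 0
  have xs : ∀ n h, x (n + 1) h = Ph (J h) (F h) (B h) (N h) (t h) (x n h) := fun n h => by
    simp only [x, Function.iterate_succ_apply']
  have xb : ∀ n, ∀ h ∈ S, Bd τ M (x n h) := by
    intro n h hh
    induction n with
    | zero => exact Bd.mono hτ le_rfl le_rfl hM Bd.zero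
    | succ n ih =>
      rw [xs]
      exact Ph_bd hτ hη hM hε hK (hJ h hh) (hF h hh) (hB h hh) (hN h hh) (ht h hh) c1 ih
  have xd : ∀ n, ∀ h ∈ S, Bd τ (M * (1 / 2) ^ n) (x n h - x (n + 1) h) := by
    intro n h hh
    induction n with
    | zero =>
      have := (Bd.zero (R := R) (τ := τ)).sub (xb 1 h hh)
      simpa [x] using this
    | succ n ih =>
      rw [xs (n + 1), xs n]
      have := Ph_sub_bd (F := F h) hτ hη hM hε hK (hJ h hh) (hB h hh) (hN h hh) (ht h hh) c2 (xb n h hh)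
        (xb (n + 1) h hh) (by positivity) ih
      rw [← xs n] at this
      rw [← xs n]
      convert this using 1
      rw [pow_succ]; ring
  have xc : ∀ n, CC S (x n) := by
    intro n
    induction n with
    | zero => intro k; simp [x, continuousOn_const]
    | succ n ih =>
      intro k
      simp only [xs, Ph, coeff_mk]
      refine cJ.clm_apply (ContinuousOn.sub ?_ (CC.Gm cF cB cN ih k))
      exact (Complex.continuous_ofReal.comp_continuousOn (ct k)).smul (ih (k + 1))
  have hdist : ∀ h ∈ S, ∀ k n, dist (coeff k (x n h)) (coeff k (x (n + 1) h))
      ≤ (M * wt τ k) * (1 / 2) ^ n := by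
    intro h hh k n
    rw [dist_eq_norm, ← map_sub]
    refine (xd n h hh k).trans (le_of_eq (by ring))
  have hlim : ∀ h, ∀ k, ∃ l : R, h ∈ S → Filter.Tendsto (fun n => coeff k (x n h)) Filter.atTop (nhds l) := by
    intro h k
    by_cases hh : h ∈ S
    · obtain ⟨l, hl⟩ := cauchySeq_tendsto_of_complete
        (cauchySeq_of_le_geometric (1/2) (M * wt τ k) (by norm_num) (hdist h hh k))
      exact ⟨l, fun _ => hl⟩
    · exact ⟨0, fun h' => absurd h' hh⟩
  choose l hl using hlim
  have hdl : ∀ h ∈ S, ∀ k n, dist (coeff k (x n h)) (l h k) ≤ 2 * (M * wt τ k) * (1 / 2) ^ n := by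
    intro h hh k n
    refine (dist_le_of_le_geometric_of_tendsto (1/2) (M * wt τ k) (by norm_num)
      (hdist h hh k) (hl h k hh) n).trans (le_of_eq (by ring))
  have hbd : ∀ h ∈ S, Bd τ M (PowerSeries.mk (l h)) := by
    intro h hh k
    rw [coeff_mk]
    exact le_of_tendsto (hl h k hh).norm (Filter.Eventually.of_forall fun n => xb n h hh k)
  have tz : ∀ c : ℝ, Filter.Tendsto (fun n : ℕ => c * (1 / 2 : ℝ) ^ n) Filter.atTop (nhds 0) := by
    intro c
    simpa using (tendsto_pow_atTop_nhds_zero_of_lt_one (r := (1/2:ℝ)) (by norm_num) (by norm_num)).const_mul c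
  refine ⟨fun h => PowerSeries.mk (l h), hbd, ?_, ?_⟩
  · intro k
    simp only [coeff_mk]
    refine TendstoUniformlyOn.continuousOn (F := fun n h => coeff k (x n h)) (p := Filter.atTop) ?_
      (Filter.Frequently.of_forall fun n => xc n k)
    rw [Metric.tendstoUniformlyOn_iff]
    intro e he
    filter_upwards [(tz (2 * (M * wt τ k))).eventually (gt_mem_nhds he)] with n hn h hh
    rw [dist_comm]
    exact (hdl h hh k n).trans_lt hn
  · intro h hh
    ext k
    rw [coeff_mk]
    have key : ∀ n : ℕ, ‖coeff k (Ph (J h) (F h) (B h) (N h) (t h) (PowerSeries.mk (l h))) - l h k‖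
        ≤ (2 * (M * wt τ k)) * (1 / 2) ^ n := by
      intro n
      have h1 : Bd τ (2 * M * (1 / 2) ^ n) (PowerSeries.mk (l h) - x n h) := by
        intro j
        rw [map_sub, coeff_mk, ← dist_eq_norm, dist_comm]
        exact (hdl h hh j n).trans (le_of_eq (by ring))
      have h2 := Ph_sub_bd (F := F h) hτ hη hM hε hK (hJ h hh) (hB h hh) (hN h hh) (ht h hh) c2
        (hbd h hh) (xb n h hh) (by positivity) h1 k
      rw [← xs, map_sub] at h2
      have h3 := hdl h hh k (n + 1)
      rw [dist_eq_norm, pow_succ] at h3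
      calc _ ≤ _ := norm_sub_le_norm_sub_add_norm_sub _ (coeff k (x (n+1) h)) _
        _ ≤ _ := add_le_add h2 h3
        _ = _ := by ring
    have := ge_of_tendsto (tz _) (Filter.Eventually.of_forall key)
    exact sub_eq_zero.mp (norm_le_zero_iff.mp this)

end ring
section exactrec
variable {R : Type*} [NormedRing R] [NormedAlgebra ℂ R]

/-- exact recursion map -/
noncomputable def Ps (h : ℝ) (A : R) (F B N : R⟦X⟧) (a₀ : R) (b : R⟦X⟧) : R⟦X⟧ :=
  PowerSeries.mk fun k => Nat.casesOn k a₀ fun j =>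
    ((h * (j + 1) : ℝ) : ℂ)⁻¹ • (A * coeff j b - coeff j b * A + coeff j (Gm F B N b))

lemma Ps_zero (h : ℝ) (A : R) (F B N : R⟦X⟧) (a₀ : R) (b : R⟦X⟧) :
    coeff 0 (Ps h A F B N a₀ b) = a₀ := by simp [Ps, -coeff_zero_eq_constantCoeff]

lemma Ps_succ (h : ℝ) (A : R) (F B N : R⟦X⟧) (a₀ : R) (b : R⟦X⟧) (j : ℕ) :
    coeff (j + 1) (Ps h A F B N a₀ b) =
    ((h * (j + 1) : ℝ) : ℂ)⁻¹ • (A * coeff j b - coeff j b * A + coeff j (Gm F B N b)) := by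
  simp [Ps]

lemma coeff_mul_congr {a a' b b' : R⟦X⟧} {n : ℕ} (ha : ∀ k < n, coeff k a = coeff k a')
    (hb : ∀ k < n, coeff k b = coeff k b') : ∀ k < n, coeff k (a * b) = coeff k (a' * b') := by
  intro k hk
  rw [coeff_mul, coeff_mul]
  refine Finset.sum_congr rfl fun p hp => ?_
  have := Finset.HasAntidiagonal.mem_antidiagonal.mp hp
  rw [ha _ (by omega), hb _ (by omega)]

lemma Gm_congr {F B N a b : R⟦X⟧} {n : ℕ} (hab : ∀ k < n, coeff k a = coeff k b) :
    ∀ k < n, coeff k (Gm F B N a) = coeff k (Gm F B N b) := by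
  intro k hk
  unfold Gm
  rw [map_sub, map_sub, map_add, map_add, map_sub, map_sub,
    coeff_mul_congr (fun _ _ => rfl) hab k hk, coeff_mul_congr hab (fun _ _ => rfl) k hk,
    coeff_mul_congr (coeff_mul_congr hab (fun _ _ => rfl)) hab k hk]

lemma Ps_congr {h : ℝ} {A : R} {F B N : R⟦X⟧} {a₀ : R} {a b : R⟦X⟧} {n : ℕ}
    (hab : ∀ k < n, coeff k a = coeff k b) :
    ∀ k < n + 1, coeff k (Ps h A F B N a₀ a) = coeff k (Ps h A F B N a₀ b) := by
  intro k hk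
  rcases k with _ | k
  · rw [Ps_zero, Ps_zero]
  · rw [Ps_succ, Ps_succ, hab k (by omega), Gm_congr hab k (by omega)]

theorem core [CompleteSpace R] {S : Set ℝ} (hS : ∀ h ∈ S, 0 < h) (s : R) (A : ℝ → R)
    (J : ℝ → R →L[ℂ] R) (F B N : ℝ → R⟦X⟧) {K C η ε τ M CA : ℝ}
    (hτ : 0 ≤ τ) (hη : 0 ≤ η) (hM : 0 < M) (hε : 0 < ε) (hK : 0 ≤ K) (hC : 0 ≤ C)
    (hJ : ∀ h ∈ S, ‖J h‖ ≤ K) (hF : ∀ h ∈ S, Bd τ C (F h)) (hB : ∀ h ∈ S, Bd τ η (B h))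
    (hN : ∀ h ∈ S, Bd τ η (N h)) (hA : ∀ h ∈ S, ‖A h‖ ≤ CA)
    (c1 : K * (ε * (4 * τ) * M + (C + 8 * η * M + 16 * η * M ^ 2)) ≤ M)
    (c2 : K * (ε * (4 * τ) + (8 * η + 32 * η * M)) ≤ 1 / 2)
    (cJ : ContinuousOn J S) (cF : CC S F) (cB : CC S B) (cN : CC S N) (cA : ContinuousOn A S)
    (oJ : ∀ h ∈ S, ∀ Y, s * J h Y = -(J h Y * s))
    (iJ : ∀ h ∈ S, ∀ Y, s * Y = -(Y * s) → A h * J h Y - J h Y * A h = Y)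
    (oA : ∀ h ∈ S, s * A h = A h * s)
    (oF : ∀ h ∈ S, PowerSeries.C s * F h = -(F h * PowerSeries.C s))
    (oB : ∀ h ∈ S, PowerSeries.C s * B h = B h * PowerSeries.C s)
    (oN : ∀ h ∈ S, PowerSeries.C s * N h = -(N h * PowerSeries.C s)) :
    ∃ τ' : ℝ, 0 < τ' ∧ τ ≤ τ' ∧ ∃ a : ℝ → R⟦X⟧, (∀ h ∈ S, Bd τ' M (a h)) ∧ CC S a ∧
      (∀ h ∈ S, PowerSeries.C s * a h = -(a h * PowerSeries.C s)) ∧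
      ∀ h ∈ S, ∀ k : ℕ, ((h * (k + 1) : ℝ) : ℂ) • coeff (k + 1) (a h)
        = A h * coeff k (a h) - coeff k (a h) * A h + coeff k (Gm (F h) (B h) (N h) (a h)) := by
  obtain ⟨a, ab, ac, af⟩ := tapered J F B N (fun h k => min (h * (k + 1)) ε) hτ hη hM.le hε.le hK
    hJ hF hB hN (by
      intro h hh k
      have := hS h hh
      rw [abs_of_nonneg (by positivity)]
      exact min_le_right _ _) c1 c2 cJ cF cB cN (by intro k; fun_prop)
  -- off-diagonality of a
  have ao : ∀ h ∈ S, PowerSeries.C s * a h = -(a h * PowerSeries.C s) := by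
    intro h hh
    ext k
    rw [coeff_C_mul, map_neg, coeff_mul_C]
    have := oJ h hh
    rw [← af h hh, Ph, coeff_mk, oJ h hh]
  set C2 : ℝ := 2 * |CA| * M + (C + 8 * η * M + 16 * η * M ^ 2) with hC2
  have hC2n : 0 ≤ C2 := by positivity
  set τ' : ℝ := max τ (C2 / (ε * M)) + 1 with hτ'
  have hττ' : τ ≤ τ' := by rw [hτ']; linarith [le_max_left τ (C2 / (ε * M))]
  have hτ'0 : 0 ≤ τ' := hτ.trans hττ'
  have hτ'1 : 0 < τ' := by linarith [le_max_left τ (C2 / (ε * M))]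
  have hτ'2 : C2 / ε ≤ M * τ' := by
    have h1 : C2 / (ε * M) ≤ τ' := by linarith [le_max_right τ (C2 / (ε * M))]
    calc C2 / ε = M * (C2 / (ε * M)) := by field_simp
      _ ≤ _ := by gcongr
  let P : ℝ → R⟦X⟧ → R⟦X⟧ := fun h => Ps h (A h) (F h) (B h) (N h) (coeff 0 (a h))
  let x : ℕ → ℝ → R⟦X⟧ := fun n h => (P h)^[n] (a h)
  have xs : ∀ n h, x (n + 1) h = P h (x n h) := fun n h => by
    simp only [x, Function.iterate_succ_apply']
  have agree : ∀ n, ∀ h ∈ S, ∀ k : ℕ, h * k ≤ ε → coeff k (x n h) = coeff k (a h) := by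
    intro n h hh
    induction n with
    | zero => intro k _; rfl
    | succ n ih =>
      intro k hk
      rw [xs]
      rcases k with _ | k
      · exact Ps_zero _ _ _ _ _ _ _
      · have h0 := hS h hh
        have hk' : h * k ≤ ε := le_trans (by push_cast; nlinarith) hk
        have hag : ∀ j < k + 1, coeff j (x n h) = coeff j (a h) := by
          intro j hj
          refine ih j (le_trans ?_ hk')
          have : (j : ℝ) ≤ k := by exact_mod_cast Nat.lt_succ_iff.mp hj
          gcongr
        have e1 := Ps_succ h (A h) (F h) (B h) (N h) (coeff 0 (a h)) (x n h) k
        rw [hag k (by omega), Gm_congr hag k (by omega)] at e1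
        refine e1.trans ?_
        have e2 : coeff k (a h) = J h (((h * (k + 1) : ℝ) : ℂ) • coeff (k + 1) (a h)
            - coeff k (Gm (F h) (B h) (N h) (a h))) := by
          conv_lhs => rw [← af h hh, Ph, coeff_mk]
          rw [min_eq_left (by push_cast at hk; exact hk)]
        have hoff : s * (((h * (k + 1) : ℝ) : ℂ) • coeff (k + 1) (a h)
            - coeff k (Gm (F h) (B h) (N h) (a h))) = -((((h * (k + 1) : ℝ) : ℂ) • coeff (k + 1) (a h)
            - coeff k (Gm (F h) (B h) (N h) (a h))) * s) := by
          have o1 := congrArg (coeff (k + 1)) (ao h hh)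
          have o2 := congrArg (coeff k) (Gm_off (oF h hh) (oB h hh) (oN h hh) (ao h hh))
          rw [coeff_C_mul, map_neg, coeff_mul_C] at o1 o2
          rw [mul_sub, sub_mul, mul_smul_comm, o1, o2, smul_mul_assoc, smul_neg]
          abel
        have e3 := iJ h hh _ hoff
        rw [← e2] at e3
        rw [e3, sub_add_cancel, inv_smul_smul₀]
        have : (0:ℝ) < h * (k + 1) := by positivity
        exact_mod_cast this.ne'
  have xb : ∀ n, ∀ h ∈ S, Bd τ' M (x n h) := by
    intro n h hh
    have h0 := hS h hh
    induction n with
    | zero => exact (ab h hh).mono hτ hM.le hττ' le_rfl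
    | succ n ih =>
      intro k
      by_cases hk : h * k ≤ ε
      · rw [agree _ h hh k hk]
        exact (ab h hh).mono hτ hM.le hττ' le_rfl k
      · rw [xs]
        rcases k with _ | k
        · exact absurd hε.le (by simpa using hk)
        · simp only [P]
          rw [Ps_succ, norm_smul]
          have g := Gm_bd hτ'0 hη hM.le ((hF h hh).mono hτ hC hττ' le_rfl)
            ((hB h hh).mono hτ hη hττ' le_rfl) ((hN h hh).mono hτ hη hττ' le_rfl) ih k
          have h1 : ‖A h * coeff k (x n h) - coeff k (x n h) * A h
              + coeff k (Gm (F h) (B h) (N h) (x n h))‖ ≤ C2 * wt τ' k := by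
            have hA' : ‖A h‖ ≤ |CA| := (hA h hh).trans (le_abs_self _)
            have i1 : ‖A h * coeff k (x n h)‖ ≤ |CA| * (M * wt τ' k) :=
              (norm_mul_le _ _).trans (by have := ih k; gcongr)
            have i2 : ‖coeff k (x n h) * A h‖ ≤ (M * wt τ' k) * |CA| :=
              (norm_mul_le _ _).trans (by
                have := ih k
                have := (norm_nonneg _).trans this
                gcongr)
            calc _ ≤ _ := norm_add_le _ _
              _ ≤ _ := add_le_add_left (norm_sub_le _ _) _
              _ ≤ |CA| * (M * wt τ' k) + (M * wt τ' k) * |CA|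
                  + (C + 8 * η * M + 16 * η * M ^ 2) * wt τ' k := by gcongr
              _ = _ := by rw [hC2]; ring
          have h2 : ‖(((h * (k + 1) : ℝ) : ℂ))⁻¹‖ ≤ ε⁻¹ := by
            rw [norm_inv, Complex.norm_real, Real.norm_eq_abs, abs_of_pos (by positivity)]
            push_cast at hk
            gcongr
            linarith
          calc _ ≤ ε⁻¹ * (C2 * wt τ' k) := by gcongr
            _ = C2 / ε * wt τ' k := by ring
            _ ≤ M * τ' * wt τ' k := by
              have := wt_nonneg hτ'0 k
              gcongr
            _ = M * (τ' * wt τ' k) := by ring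
            _ ≤ _ := by have := wt_le_succ hτ'0 k; gcongr
  have xc : ∀ n, CC S (x n) := by
    intro n
    induction n with
    | zero => exact ac
    | succ n ih =>
      intro k
      simp only [xs, P]
      rcases k with _ | k
      · simp only [Ps_zero]; exact ac 0
      · simp only [Ps_succ]
        refine ContinuousOn.smul ?_ (((cA.mul (ih k)).sub ((ih k).mul cA)).add
          (CC.Gm cF cB cN ih k))
        refine ContinuousOn.inv₀ (by fun_prop) ?_
        intro h hh
        have := hS h hh
        have : (0:ℝ) < h * (k + 1) := by positivity
        exact_mod_cast this.ne'
  have xo : ∀ n, ∀ h ∈ S, PowerSeries.C s * x n h = -(x n h * PowerSeries.C s) := by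
    intro n h hh
    induction n with
    | zero => exact ao h hh
    | succ n ih =>
      rw [xs]
      ext k
      rw [coeff_C_mul, map_neg, coeff_mul_C]
      rcases k with _ | k
      · simp only [P, Ps_zero]
        have o1 := congrArg (coeff 0) (ao h hh)
        rwa [coeff_C_mul, map_neg, coeff_mul_C] at o1
      · simp only [P, Ps_succ]
        have o1 := congrArg (coeff k) ih
        have o2 := congrArg (coeff k) (Gm_off (oF h hh) (oB h hh) (oN h hh) ih)
        rw [coeff_C_mul, map_neg, coeff_mul_C] at o1 o2
        have o3 : s * (A h * coeff k (x n h)) = -(A h * coeff k (x n h) * s) := by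
          rw [← mul_assoc, oA h hh, mul_assoc, o1]; noncomm_ring
        have o4 : s * (coeff k (x n h) * A h) = -(coeff k (x n h) * A h * s) := by
          rw [← mul_assoc, o1, neg_mul, mul_assoc, oA h hh]; noncomm_ring
        rw [mul_smul_comm, mul_add s, mul_sub s, o3, o4, o2, smul_mul_assoc, ← smul_neg]
        congr 1
        noncomm_ring
  have stab : ∀ h, ∀ n, ∀ k < n + 1, coeff k (x n h) = coeff k (x (n + 1) h) := by
    intro h n
    induction n with
    | zero =>
      intro k hk
      obtain rfl : k = 0 := by omega
      rw [xs]
      exact (Ps_zero _ _ _ _ _ _ _).symm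
    | succ n ih =>
      rw [xs (n + 1), xs n]
      rw [xs n] at ih
      exact Ps_congr ih
  have stab2 : ∀ h, ∀ m n k, k < n + 1 → coeff k (x n h) = coeff k (x (n + m) h) := by
    intro h m
    induction m with
    | zero => intros; rfl
    | succ m ih => intro n k hk; rw [ih n k hk, stab h (n + m) k (by omega)]; rfl
  refine ⟨τ', hτ'1, hττ', fun h => PowerSeries.mk fun k => coeff k (x k h), ?_, ?_, ?_, ?_⟩
  · intro h hh k
    rw [coeff_mk]
    exact xb k h hh k
  · intro k
    simp only [coeff_mk]
    exact xc k k
  · intro h hh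
    ext k
    have o1 := congrArg (coeff k) (xo k h hh)
    rw [coeff_C_mul, map_neg, coeff_mul_C] at o1 ⊢
    simpa only [coeff_mk] using o1
  · intro h hh k
    have hag : ∀ j < k + 1, coeff j (PowerSeries.mk fun k => coeff k (x k h)) = coeff j (x k h) := by
      intro j hj
      rw [coeff_mk, stab2 h (k - j) j j (by omega)]
      congr 3
      omega
    rw [Gm_congr hag k (by omega), hag k (by omega), coeff_mk, xs]
    simp only [P, Ps_succ]
    rw [smul_inv_smul₀]
    have := hS h hh
    have : (0:ℝ) < h * (k + 1) := by positivity
    exact_mod_cast this.ne'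

end exactrec
section evs
variable {R : Type*} [NormedRing R] [NormedAlgebra ℂ R]

noncomputable def ev (a : R⟦X⟧) (z : ℂ) : R := ∑' k, z ^ k • coeff k a

variable {τ M M' : ℝ} {a b : R⟦X⟧} {z : ℂ}

lemma ev_term (hτ : 0 < τ) (hM : 0 ≤ M) (ha : Bd τ M a) (hz : ‖z‖ < 1 / (8 * τ)) (k : ℕ) :
    ‖z ^ k • coeff k a‖ ≤ M * (1 / 2) ^ k := by
  rw [norm_smul, norm_pow]
  calc _ ≤ (1 / (8 * τ)) ^ k * (M * (4 * τ) ^ k) := by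
        have := (ha k).trans (mul_le_mul_of_nonneg_left (wt_le_pow hτ.le k) hM)
        gcongr
    _ = M * ((1 / (8 * τ)) * (4 * τ)) ^ k := by rw [mul_pow (1 / (8 * τ)) (4 * τ) k]; ring
    _ = _ := by congr 2; field_simp; norm_num

lemma sum_half (M : ℝ) : Summable fun k : ℕ => M * (1 / 2 : ℝ) ^ k :=
  (summable_geometric_two).mul_left M

lemma ev_summable (hτ : 0 < τ) (hM : 0 ≤ M) (ha : Bd τ M a) (hz : ‖z‖ < 1 / (8 * τ)) :
    Summable fun k => ‖z ^ k • coeff k a‖ :=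
  Summable.of_nonneg_of_le (fun _ => norm_nonneg _) (ev_term hτ hM ha hz) (sum_half M)

lemma ev_norm (hτ : 0 < τ) (hM : 0 ≤ M) (ha : Bd τ M a) (hz : ‖z‖ < 1 / (8 * τ)) :
    ‖ev a z‖ ≤ M * 2 := by
  unfold ev
  refine tsum_of_norm_bounded ?_ (ev_term hτ hM ha hz)
  exact hasSum_geometric_two.mul_left M

variable [CompleteSpace R]

lemma ev_mul (hτ : 0 < τ) (hM : 0 ≤ M) (hM' : 0 ≤ M') (ha : Bd τ M a) (hb : Bd τ M' b)
    (hz : ‖z‖ < 1 / (8 * τ)) : ev (a * b) z = ev a z * ev b z := by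
  unfold ev
  rw [tsum_mul_tsum_eq_tsum_sum_antidiagonal_of_summable_norm
    (ev_summable hτ hM ha hz) (ev_summable hτ hM' hb hz)]
  refine tsum_congr fun k => ?_
  rw [coeff_mul, Finset.smul_sum]
  refine Finset.sum_congr rfl fun p hp => ?_
  rw [← Finset.HasAntidiagonal.mem_antidiagonal.mp hp, pow_add, smul_mul_smul_comm]

lemma ev_add (hτ : 0 < τ) (hM : 0 ≤ M) (hM' : 0 ≤ M') (ha : Bd τ M a) (hb : Bd τ M' b)
    (hz : ‖z‖ < 1 / (8 * τ)) : ev (a + b) z = ev a z + ev b z := by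
  unfold ev
  rw [← (ev_summable hτ hM ha hz).of_norm.tsum_add (ev_summable hτ hM' hb hz).of_norm]
  simp

lemma ev_sub (hτ : 0 < τ) (hM : 0 ≤ M) (hM' : 0 ≤ M') (ha : Bd τ M a) (hb : Bd τ M' b)
    (hz : ‖z‖ < 1 / (8 * τ)) : ev (a - b) z = ev a z - ev b z := by
  unfold ev
  rw [← (ev_summable hτ hM ha hz).of_norm.tsum_sub (ev_summable hτ hM' hb hz).of_norm]
  simp [smul_sub]

lemma ev_C (x : R) : ev (PowerSeries.C x) z = x := by
  unfold ev
  rw [tsum_eq_single 0]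
  · simp
  · intro k hk
    simp [coeff_C, hk]

lemma bd_C (hτ : 0 < τ) (x : R) : Bd τ ‖x‖ (PowerSeries.C x) := by
  intro k
  rcases k with _ | k
  · simp [wt]
  · simp only [coeff_C, Nat.add_eq_zero_iff, one_ne_zero, and_false, if_false, norm_zero]
    have := wt_nonneg hτ.le (k + 1)
    positivity

lemma ev_diff (hτ : 0 < τ) (hM : 0 ≤ M) (ha : Bd τ M a) :
    DifferentiableOn ℂ (ev a) (Metric.ball 0 (1 / (8 * τ))) := by
  unfold ev
  refine Complex.differentiableOn_tsum_of_summable_norm (sum_half M) (fun k => by fun_prop)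
    Metric.isOpen_ball fun k w hw => ev_term hτ hM ha (by simpa using hw) k

lemma ev_deriv (hτ : 0 < τ) (hM : 0 ≤ M) (ha : Bd τ M a) (hz : ‖z‖ < 1 / (8 * τ)) :
    HasSum (fun k : ℕ => ((k + 1 : ℂ) * z ^ k) • coeff (k + 1) a) (deriv (ev a) z) := by
  have := Complex.hasSum_deriv_of_summable_norm (F := fun k (w : ℂ) => w ^ k • coeff k a) (z := z)
    (sum_half M) (fun k => by fun_prop)
    (Metric.isOpen_ball (x := (0:ℂ)) (ε := 1 / (8 * τ)))
    (fun k w hw => ev_term hτ hM ha (by simpa using hw) k) (by simpa using hz)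
  have e : ∀ k : ℕ, deriv (fun w : ℂ => w ^ k • coeff k a) z = ((k : ℂ) * z ^ (k - 1)) • coeff k a := by
    intro k
    rw [deriv_smul_const (by fun_prop), deriv_pow_field]
  simp only [e] at this
  rw [← hasSum_nat_add_iff' 1] at this
  have e2 : ev a = fun w => ∑' i, w ^ i • coeff i a := rfl
  rw [e2]
  simpa using this

lemma ev_cont (hτ : 0 < τ) (hM : 0 ≤ M) {S : Set ℝ} {a : ℝ → R⟦X⟧} (ca : CC S a)
    (ha : ∀ h ∈ S, Bd τ M (a h)) (hz : ‖z‖ < 1 / (8 * τ)) :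
    ContinuousOn (fun h => ev (a h) z) S := by
  unfold ev
  refine continuousOn_tsum (fun k => (ca k).const_smul _) (sum_half M) fun k h hh => ?_
  exact ev_term hτ hM (ha h hh) hz k

lemma ev_ode (hτ : 0 < τ) (hM : 0 ≤ M) {C η : ℝ} (hC : 0 ≤ C) (hη : 0 ≤ η) {F B N : R⟦X⟧} {A : R} {h : ℝ}
    (ha : Bd τ M a) (hF : Bd τ C F) (hB : Bd τ η B) (hN : Bd τ η N)
    (hz : ‖z‖ < 1 / (8 * τ))
    (hrec : ∀ k : ℕ, ((h * (k + 1) : ℝ) : ℂ) • coeff (k + 1) a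
        = A * coeff k a - coeff k a * A + coeff k (Gm F B N a)) :
    (h : ℂ) • deriv (ev a) z = A * ev a z - ev a z * A +
      (ev F z + (ev B z * ev a z - ev a z * ev B z) - ev a z * ev N z * ev a z) := by
  have e1 : (h : ℂ) • deriv (ev a) z
      = ev (PowerSeries.C A * a - a * PowerSeries.C A + Gm F B N a) z := by
    rw [← ((ev_deriv hτ hM ha hz).const_smul (h : ℂ)).tsum_eq]
    unfold ev
    refine tsum_congr fun k => ?_
    rw [map_add, map_sub, coeff_C_mul, coeff_mul_C, ← hrec, smul_smul, smul_smul]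
    congr 1
    push_cast; ring
  have bA := bd_C hτ A
  have nA := norm_nonneg A
  rw [e1, ev_add hτ (M := 4 * ‖A‖ * M + 4 * M * ‖A‖) (by positivity) (by positivity)
      ((bA.mul hτ.le nA hM ha).sub (ha.mul hτ.le hM nA bA)) (Gm_bd hτ.le hη hM hF hB hN ha) hz,
    ev_sub hτ (by positivity) (by positivity) (bA.mul hτ.le nA hM ha) (ha.mul hτ.le hM nA bA) hz,
    ev_mul hτ nA hM bA ha hz, ev_mul hτ hM nA ha bA hz, ev_C]
  congr 1
  unfold Gm
  have b1 := hB.mul hτ.le hη hM ha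
  have b2 := ha.mul hτ.le hM hη hB
  have b3 := ha.mul hτ.le hM hη hN
  rw [ev_sub hτ (by positivity) (by positivity) (hF.add (b1.sub b2)) (b3.mul hτ.le (by positivity) hM ha) hz,
    ev_add hτ hC (by positivity) hF (b1.sub b2) hz, ev_sub hτ (by positivity) (by positivity) b1 b2 hz,
    ev_mul hτ (by positivity) hM b3 ha hz, ev_mul hτ hM hη ha hN hz, ev_mul hτ hM hη ha hB hz,
    ev_mul hτ hη hM hB ha hz]

end evs

section cauchy
variable {R : Type*} [NormedRing R] [NormedAlgebra ℂ R]

noncomputable def cp (f : ℂ → R) (c : ℂ) (r : ℝ) : R⟦X⟧ :=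
  PowerSeries.mk fun k => (cauchyPowerSeries f c r).coeff k

lemma cp_eq (f : ℂ → R) (c : ℂ) (r : ℝ) (k : ℕ) :
    coeff k (cp f c r) = (2 * Real.pi * Complex.I : ℂ)⁻¹ •
      ∫ θ in (0:ℝ)..2 * Real.pi,
        ((circleMap 0 r θ * Complex.I) * (1 / circleMap 0 r θ) ^ k * (circleMap 0 r θ)⁻¹) •
          f (circleMap c r θ) := by
  rw [cp, coeff_mk, FormalMultilinearSeries.coeff]
  have := cauchyPowerSeries_apply f c r k 1
  rw [show (1 : Fin k → ℂ) = fun _ => 1 from rfl, this]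
  congr 1
  unfold circleIntegral
  congr 1
  ext θ
  rw [deriv_circleMap]
  beta_reduce
  rw [circleMap_sub_center, smul_smul, smul_smul]

lemma circ_mem {c : ℂ} {r : ℝ} (hr : 0 < r) (θ : ℝ) : circleMap c r θ ∈ Metric.closedBall c r :=
  circleMap_mem_closedBall c hr.le θ

lemma circ_cont {f : ℂ → R} {c : ℂ} {r : ℝ} (hr : 0 < r)
    (hf : ContinuousOn f (Metric.closedBall c r)) : Continuous fun θ => f (circleMap c r θ) :=
  hf.comp_continuous (continuous_circleMap c r) (circ_mem hr)

lemma wcirc_cont {r : ℝ} (hr : 0 < r) (k : ℕ) : Continuous fun θ : ℝ =>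
    ((circleMap 0 r θ * Complex.I) * (1 / circleMap 0 r θ) ^ k * (circleMap 0 r θ)⁻¹) := by
  have h0 : ∀ θ, circleMap 0 r θ ≠ 0 := fun θ => circleMap_ne_center hr.ne'
  have := continuous_circleMap 0 r
  fun_prop (disch := exact h0)

lemma cp_bd {f : ℂ → R} {c : ℂ} {r C : ℝ} (hr : 0 < r)
    (hb : ∀ z ∈ Metric.closedBall c r, ‖f z‖ ≤ C) (k : ℕ) : ‖coeff k (cp f c r)‖ ≤ C * (r⁻¹) ^ k := by
  rw [cp, coeff_mk]
  have h1 := norm_cauchyPowerSeries_le f c r k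
  rw [abs_of_pos hr] at h1
  have h3 : ‖(cauchyPowerSeries f c r).coeff k‖ ≤ ‖cauchyPowerSeries f c r k‖ := by
    rw [FormalMultilinearSeries.norm_apply_eq_norm_coef]
  refine h3.trans (h1.trans ?_)
  have h2 : ∫ θ in (0:ℝ)..2 * Real.pi, ‖f (circleMap c r θ)‖ ≤ C * (2 * Real.pi) := by
    have := intervalIntegral.norm_integral_le_of_norm_le_const (a := 0) (b := 2 * Real.pi) (C := C)
      (f := fun θ => ‖f (circleMap c r θ)‖) (fun θ _ => by simpa using hb _ (circ_mem hr θ))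
    rw [sub_zero, abs_of_pos Real.two_pi_pos] at this
    exact (le_abs_self _).trans this
  have hpi := Real.two_pi_pos
  calc _ ≤ ((2 * Real.pi)⁻¹ * (C * (2 * Real.pi))) * r⁻¹ ^ k := by gcongr
    _ = _ := by field_simp

lemma cp_cc {f : ℂ → ℝ → R} {c : ℂ} {r C : ℝ} {S : Set ℝ} (hr : 0 < r)
    (hb : ∀ h ∈ S, ∀ z ∈ Metric.closedBall c r, ‖f z h‖ ≤ C)
    (hf : ∀ h ∈ S, ContinuousOn (fun z => f z h) (Metric.closedBall c r))
    (hc : ∀ z ∈ Metric.closedBall c r, ContinuousOn (f z) S) :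
    CC S (fun h => cp (fun z => f z h) c r) := by
  intro k
  simp only [cp_eq]
  refine ContinuousOn.const_smul ?_ _
  intro h hh
  refine intervalIntegral.continuousWithinAt_of_dominated_interval
    (bound := fun θ => ‖((circleMap 0 r θ * Complex.I) * (1 / circleMap 0 r θ) ^ k * (circleMap 0 r θ)⁻¹)‖ * C) ?_ ?_ ?_ ?_
  · filter_upwards [self_mem_nhdsWithin] with h hh
    exact ((wcirc_cont hr k).smul (circ_cont hr (hf h hh))).aestronglyMeasurable
  · filter_upwards [self_mem_nhdsWithin] with h hh
    refine Filter.Eventually.of_forall fun θ _ => ?_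
    rw [norm_smul]
    have := hb h hh _ (circ_mem hr θ)
    gcongr
  · exact ((wcirc_cont hr k).norm.mul continuous_const).intervalIntegrable _ _
  · exact Filter.Eventually.of_forall fun θ _ => (hc _ (circ_mem hr θ) h hh).const_smul _

lemma cp_clm [CompleteSpace R] {f : ℂ → R} {c : ℂ} {r : ℝ} (hr : 0 < r) (φ : R →L[ℂ] R)
    (hf : ContinuousOn f (Metric.closedBall c r))
    (h0 : ∀ z ∈ Metric.closedBall c r, φ (f z) = 0) (k : ℕ) : φ (coeff k (cp f c r)) = 0 := by
  rw [cp_eq, map_smul, ← ContinuousLinearMap.intervalIntegral_comp_comm]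
  · simp [h0 _ (circ_mem hr _)]
  · exact ((wcirc_cont hr k).smul (circ_cont hr hf)).intervalIntegrable _ _

lemma cp_comm [CompleteSpace R] {f : ℂ → R} {c : ℂ} {r : ℝ} (hr : 0 < r) (s : R)
    (hf : ContinuousOn f (Metric.closedBall c r))
    (h0 : ∀ z ∈ Metric.closedBall c r, s * f z = f z * s) :
    PowerSeries.C s * cp f c r = cp f c r * PowerSeries.C s := by
  ext k
  have := cp_clm hr (ContinuousLinearMap.mul ℂ R s - (ContinuousLinearMap.mul ℂ R).flip s) hf
    (fun z hz => by simp [h0 z hz]) k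
  rw [coeff_C_mul, coeff_mul_C]
  simpa [sub_eq_zero] using this

lemma cp_anti [CompleteSpace R] {f : ℂ → R} {c : ℂ} {r : ℝ} (hr : 0 < r) (s : R)
    (hf : ContinuousOn f (Metric.closedBall c r))
    (h0 : ∀ z ∈ Metric.closedBall c r, s * f z = -(f z * s)) :
    PowerSeries.C s * cp f c r = -(cp f c r * PowerSeries.C s) := by
  ext k
  have := cp_clm hr (ContinuousLinearMap.mul ℂ R s + (ContinuousLinearMap.mul ℂ R).flip s) hf
    (fun z hz => by simp [h0 z hz]) k
  rw [coeff_C_mul, map_neg, coeff_mul_C]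
  exact eq_neg_of_add_eq_zero_left (by simpa using this)

lemma cp_ev [CompleteSpace R] {f : ℂ → R} {c z : ℂ} {r : ℝ} (hr : 0 < r)
    (hf : DifferentiableOn ℂ f (Metric.closedBall c r)) (hz : ‖z‖ < r) :
    ev (cp f c r) z = f (c + z) := by
  lift r to NNReal using hr.le
  have h := hf.hasFPowerSeriesOnBall (by exact_mod_cast hr)
  have h2 := h.hasSum (y := z) (by
    rw [Metric.mem_eball, edist_zero_right]
    rw [← ofReal_norm, ENNReal.ofReal_lt_coe_iff (norm_nonneg _)]
    exact hz)
  rw [← h2.tsum_eq, ev]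
  refine tsum_congr fun k => ?_
  rw [cp, coeff_mk, FormalMultilinearSeries.apply_eq_pow_smul_coeff]

lemma cp_coeff_zero [CompleteSpace R] {f : ℂ → R} {c : ℂ} {r : ℝ} (hr : 0 < r)
    (hf : DifferentiableOn ℂ f (Metric.closedBall c r)) :
    coeff 0 (cp f c r) = f c := by
  have := cp_ev (z := 0) hr hf (by simpa using hr)
  rw [add_zero] at this
  rw [← this, ev, tsum_eq_single 0]
  · simp
  · intro k hk; simp [hk]

end cauchy
section ringmain
variable {R : Type*} [NormedRing R] [NormedAlgebra ℂ R] [CompleteSpace R]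

lemma cp_Bd {f : ℂ → R} {c : ℂ} {r C τ : ℝ} (hr : 0 < r) (hC : 0 ≤ C) (hτ : r⁻¹ ≤ τ)
    (hb : ∀ z ∈ Metric.closedBall c r, ‖f z‖ ≤ C) : Bd τ C (cp f c r) := by
  intro k
  have hr' : 0 < r⁻¹ := inv_pos.mpr hr
  calc _ ≤ _ := cp_bd hr hb k
    _ ≤ C * τ ^ k := by gcongr
    _ ≤ _ := by have := pow_le_wt (hr'.le.trans hτ) k; gcongr

lemma cp_Bd' {f : ℂ → R} {c : ℂ} {r C τ : ℝ} (hr : 0 < r) (hC : 0 ≤ C) (hτ : r⁻¹ ≤ τ)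
    (hb : ∀ z ∈ Metric.closedBall c r, ‖f z‖ ≤ C) :
    Bd τ (C * r⁻¹ / τ) (cp f c r - PowerSeries.C (coeff 0 (cp f c r))) := by
  have hr' : 0 < r⁻¹ := inv_pos.mpr hr
  have hτ0 : 0 < τ := hr'.trans_le hτ
  intro k
  rcases k with _ | k
  · have := wt_nonneg hτ0.le 0
    simp only [map_sub, coeff_C, if_true, sub_self, norm_zero]
    positivity
  · have e : coeff (k + 1) (cp f c r - PowerSeries.C (coeff 0 (cp f c r)))
        = coeff (k + 1) (cp f c r) := by simp [coeff_C]
    rw [e]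
    calc _ ≤ _ := cp_bd hr hb (k + 1)
      _ = C * (r⁻¹ ^ k * r⁻¹) := by rw [pow_succ]
      _ ≤ C * (τ ^ k * r⁻¹) := by gcongr
      _ = C * r⁻¹ / τ * τ ^ (k + 1) := by rw [pow_succ]; field_simp
      _ ≤ _ := by have := pow_le_wt hτ0.le (k + 1); gcongr

theorem ring_main (p : ℕ) (hp : 1 ≤ p) (h₀ : ℝ) (hh₀ : 0 < h₀) (c : ℂ) (U : Set ℂ)
    (hU : IsOpen U) (hcU : c ∈ U) (s : R) (A D O : ℂ → ℝ → R)
    (dA : ∀ h ∈ Set.Ioc 0 h₀, DifferentiableOn ℂ (fun z => A z h) U)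
    (dD : ∀ h ∈ Set.Ioc 0 h₀, DifferentiableOn ℂ (fun z => D z h) U)
    (dO : ∀ h ∈ Set.Ioc 0 h₀, DifferentiableOn ℂ (fun z => O z h) U)
    {C K : ℝ}
    (bA : ∀ z ∈ U, ∀ h ∈ Set.Ioc 0 h₀, ‖A z h‖ ≤ C)
    (bD : ∀ z ∈ U, ∀ h ∈ Set.Ioc 0 h₀, ‖D z h‖ ≤ C)
    (bO : ∀ z ∈ U, ∀ h ∈ Set.Ioc 0 h₀, ‖O z h‖ ≤ C)
    (cA : ∀ z ∈ U, ContinuousOn (fun h => A z h) (Set.Ioc 0 h₀))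
    (cD : ∀ z ∈ U, ContinuousOn (fun h => D z h) (Set.Ioc 0 h₀))
    (cO : ∀ z ∈ U, ContinuousOn (fun h => O z h) (Set.Ioc 0 h₀))
    (oA : ∀ z h, s * A z h = A z h * s) (oD : ∀ z h, s * D z h = D z h * s)
    (oO : ∀ z h, s * O z h = -(O z h * s))
    (J : ℝ → R →L[ℂ] R) (hJ : ∀ h ∈ Set.Ioc 0 h₀, ‖J h‖ ≤ K)
    (cJ : ContinuousOn J (Set.Ioc 0 h₀))
    (oJ : ∀ h ∈ Set.Ioc 0 h₀, ∀ Y, s * J h Y = -(J h Y * s))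
    (iJ : ∀ h ∈ Set.Ioc 0 h₀, ∀ Y, s * Y = -(Y * s) → A c h * J h Y - J h Y * A c h = Y) :
    ∃ V : Set ℂ, IsOpen V ∧ c ∈ V ∧ V ⊆ U ∧ ∃ h₁ ∈ Set.Ioc 0 h₀, ∃ X : ℂ → ℝ → R,
      (∀ h ∈ Set.Ioc 0 h₁, DifferentiableOn ℂ (fun z => X z h) V) ∧
      (∀ z ∈ V, ContinuousOn (fun h => X z h) (Set.Ioc 0 h₁)) ∧
      (∃ C, ∀ z ∈ V, ∀ h ∈ Set.Ioc 0 h₁, ‖X z h‖ ≤ C) ∧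
      (∀ h ∈ Set.Ioc 0 h₁, ∀ z ∈ V, s * X z h = -(X z h * s)) ∧
      (∀ h ∈ Set.Ioc 0 h₁, ∀ z ∈ V, (h : ℂ) • deriv (fun w => X w h) z =
        A z h * X z h - X z h * A z h + O z h
          + (h : ℂ) ^ p • (D z h * X z h - X z h * D z h)
          - (h : ℂ) ^ (2 * p) • (X z h * O z h * X z h)) := by
  obtain ⟨r, hr, hrU⟩ := Metric.nhds_basis_closedBall.mem_iff.mp (hU.mem_nhds hcU)
  have hC : 0 ≤ C := (norm_nonneg _).trans (bA c hcU h₀ ⟨hh₀, le_rfl⟩)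
  set K' : ℝ := |K| + 1 with hK'
  have hK'1 : 1 ≤ K' := by rw [hK']; linarith [abs_nonneg K]
  have hK'0 : 0 < K' := by linarith
  set M : ℝ := 2 * K' * C + 1 with hMdef
  have hM : 0 < M := by positivity
  set η : ℝ := 1 / (4 * K' * (8 + 32 * M)) with hηdef
  have hη : 0 < η := by positivity
  have hr' : 0 < r⁻¹ := inv_pos.mpr hr
  set τ : ℝ := r⁻¹ + 2 * C * r⁻¹ / η with hτdef
  have hτr : r⁻¹ ≤ τ := by
    have : 0 ≤ 2 * C * r⁻¹ / η := by positivity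
    linarith
  have hτ : 0 < τ := hr'.trans_le hτr
  have hτη : C * r⁻¹ / τ ≤ η / 2 := by
    rw [div_le_iff₀ hτ]
    have h1 : 2 * C * r⁻¹ / η ≤ τ := by linarith
    rw [div_le_iff₀ hη] at h1
    linarith
  set ε : ℝ := 1 / (16 * K' * τ) with hεdef
  have hε : 0 < ε := by positivity
  set h₁ : ℝ := min h₀ (min 1 (η / (2 * (C + 1)))) with hh₁def
  have hh₁ : 0 < h₁ := by positivity
  have hsub : Set.Ioc 0 h₁ ⊆ Set.Ioc 0 h₀ := Set.Ioc_subset_Ioc_right (min_le_left _ _)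
  have hpw : ∀ q, 1 ≤ q → ∀ h ∈ Set.Ioc 0 h₁, ‖(h : ℂ) ^ q‖ * C ≤ η / 2 := by
    intro q hq h hh
    have i1 : h ≤ 1 := hh.2.trans ((min_le_right _ _).trans (min_le_left _ _))
    have i2 : h ≤ η / (2 * (C + 1)) := hh.2.trans ((min_le_right _ _).trans (min_le_right _ _))
    rw [norm_pow, Complex.norm_real, Real.norm_eq_abs, abs_of_pos hh.1]
    have i3 : h ^ q ≤ h := pow_le_of_le_one hh.1.le i1 (by omega)
    calc _ ≤ η / (2 * (C + 1)) * (C + 1) := by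
          gcongr
          · exact i3.trans i2
          · linarith
      _ = _ := by field_simp
  have c2 : K' * (ε * (4 * τ) + (8 * η + 32 * η * M)) ≤ 1 / 2 := by
    apply le_of_eq
    have e1 : K' * (ε * (4 * τ)) = 1 / 4 := by rw [hεdef]; field_simp; norm_num
    have e2 : K' * (8 * η + 32 * η * M) = 1 / 4 := by
      have : K' * (8 * η + 32 * η * M) = K' * (8 + 32 * M) * η := by ring
      rw [this, hηdef]; field_simp
    rw [mul_add, e1, e2]; norm_num
  have c1 : K' * (ε * (4 * τ) * M + (C + 8 * η * M + 16 * η * M ^ 2)) ≤ M := by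
    have i1 : K' * (ε * (4 * τ) + (8 * η + 16 * η * M)) ≤ 1 / 2 := by
      refine le_trans ?_ c2
      gcongr
      norm_num
    have i2 : K' * C ≤ M / 2 := by rw [hMdef]; linarith
    calc _ = K' * (ε * (4 * τ) + (8 * η + 16 * η * M)) * M + K' * C := by ring
      _ ≤ 1 / 2 * M + M / 2 := by gcongr
      _ = _ := by ring
  have bF : ∀ h ∈ Set.Ioc 0 h₁, Bd τ C (cp (fun z => O z h) c r) := fun h hh =>
    cp_Bd hr hC hτr fun z hz => bO z (hrU hz) h (hsub hh)
  have dO' : ∀ h ∈ Set.Ioc 0 h₁, DifferentiableOn ℂ (fun z => O z h) (Metric.closedBall c r) :=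
    fun h hh => (dO h (hsub hh)).mono hrU
  have dA' : ∀ h ∈ Set.Ioc 0 h₁, DifferentiableOn ℂ (fun z => A z h) (Metric.closedBall c r) :=
    fun h hh => (dA h (hsub hh)).mono hrU
  have dD' : ∀ h ∈ Set.Ioc 0 h₁, DifferentiableOn ℂ (fun z => (h : ℂ) ^ p • D z h) (Metric.closedBall c r) :=
    fun h hh => ((dD h (hsub hh)).mono hrU).fun_const_smul _
  have dN' : ∀ h ∈ Set.Ioc 0 h₁, DifferentiableOn ℂ (fun z => (h : ℂ) ^ (2 * p) • O z h) (Metric.closedBall c r) :=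
    fun h hh => (dO' h hh).fun_const_smul _
  have bnD : ∀ h ∈ Set.Ioc 0 h₁, ∀ z ∈ Metric.closedBall c r, ‖(h : ℂ) ^ p • D z h‖ ≤ η / 2 := by
    intro h hh z hz
    rw [norm_smul]
    refine le_trans ?_ (hpw p hp h hh)
    have := bD z (hrU hz) h (hsub hh)
    gcongr
  have bnN : ∀ h ∈ Set.Ioc 0 h₁, ∀ z ∈ Metric.closedBall c r, ‖(h : ℂ) ^ (2 * p) • O z h‖ ≤ η := by
    intro h hh z hz
    rw [norm_smul]
    refine le_trans (le_trans ?_ (hpw (2 * p) (by omega) h hh)) (by linarith)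
    have := bO z (hrU hz) h (hsub hh)
    gcongr
  have bB1 : ∀ h ∈ Set.Ioc 0 h₁, Bd τ (η / 2) (cp (fun z => A z h) c r
      - PowerSeries.C (coeff 0 (cp (fun z => A z h) c r))) := fun h hh =>
    (cp_Bd' hr hC hτr fun z hz => bA z (hrU hz) h (hsub hh)).mono hτ.le (by positivity) le_rfl hτη
  have bB2 : ∀ h ∈ Set.Ioc 0 h₁, Bd τ (η / 2) (cp (fun z => (h : ℂ) ^ p • D z h) c r) := fun h hh =>
    cp_Bd hr (by positivity) hτr (bnD h hh)
  have bB : ∀ h ∈ Set.Ioc 0 h₁, Bd τ η (cp (fun z => A z h) c r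
      - PowerSeries.C (coeff 0 (cp (fun z => A z h) c r)) + cp (fun z => (h : ℂ) ^ p • D z h) c r) := by
    intro h hh
    have := (bB1 h hh).add (bB2 h hh)
    rwa [add_halves] at this
  have bN : ∀ h ∈ Set.Ioc 0 h₁, Bd τ η (cp (fun z => (h : ℂ) ^ (2 * p) • O z h) c r) := fun h hh =>
    cp_Bd hr hη.le hτr (bnN h hh)
  have hpc : ∀ q : ℕ, ContinuousOn (fun h : ℝ => (h : ℂ) ^ q) (Set.Ioc 0 h₁) := fun q => by fun_prop
  have ccA : CC (Set.Ioc 0 h₁) (fun h => cp (fun z => A z h) c r) :=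
    cp_cc hr (fun h hh z hz => bA z (hrU hz) h (hsub hh)) (fun h hh => (dA' h hh).continuousOn)
      fun z hz => (cA z (hrU hz)).mono hsub
  have ccO : CC (Set.Ioc 0 h₁) (fun h => cp (fun z => O z h) c r) :=
    cp_cc hr (fun h hh z hz => bO z (hrU hz) h (hsub hh)) (fun h hh => (dO' h hh).continuousOn)
      fun z hz => (cO z (hrU hz)).mono hsub
  have ccD : CC (Set.Ioc 0 h₁) (fun h => cp (fun z => (h : ℂ) ^ p • D z h) c r) :=
    cp_cc (f := fun z h => (h : ℂ) ^ p • D z h) hr bnD (fun h hh => (dD' h hh).continuousOn)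
      fun z hz => (hpc p).smul ((cD z (hrU hz)).mono hsub)
  have ccN : CC (Set.Ioc 0 h₁) (fun h => cp (fun z => (h : ℂ) ^ (2 * p) • O z h) c r) :=
    cp_cc (f := fun z h => (h : ℂ) ^ (2 * p) • O z h) hr bnN (fun h hh => (dN' h hh).continuousOn)
      fun z hz => (hpc (2 * p)).smul ((cO z (hrU hz)).mono hsub)
  have ccC : CC (Set.Ioc 0 h₁) (fun h => PowerSeries.C (coeff 0 (cp (fun z => A z h) c r))) := by
    intro k
    simp only [coeff_C]
    split_ifs
    · exact ccA 0
    · exact continuousOn_const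
  obtain ⟨τ', hτ', hττ', a, ba, ca, oa, ra⟩ := core (S := Set.Ioc 0 h₁) (fun h hh => hh.1) s
    (fun h => A c h) J (fun h => cp (fun z => O z h) c r)
    (fun h => cp (fun z => A z h) c r - PowerSeries.C (coeff 0 (cp (fun z => A z h) c r))
      + cp (fun z => (h : ℂ) ^ p • D z h) c r)
    (fun h => cp (fun z => (h : ℂ) ^ (2 * p) • O z h) c r)
    hτ.le hη.le hM hε hK'0.le hC
    (fun h hh => (hJ h (hsub hh)).trans (by rw [hK']; linarith [le_abs_self K])) bF bB bN
    (fun h hh => bA c hcU h (hsub hh)) c1 c2 (cJ.mono hsub) ccO ((ccA.sub ccC).add ccD) ccN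
    ((cA c hcU).mono hsub) (fun h hh => oJ h (hsub hh)) (fun h hh => iJ h (hsub hh))
    (fun h _ => oA c h)
    (fun h hh => cp_anti hr s (dO' h hh).continuousOn fun z _ => oO z h)
    (fun h hh => by
      rw [mul_add, add_mul, mul_sub, sub_mul,
        cp_comm hr s (dA' h hh).continuousOn fun z _ => oA z h,
        cp_comm hr s (dD' h hh).continuousOn fun z _ => by
          rw [mul_smul_comm, smul_mul_assoc, oD z h],
        cp_coeff_zero hr (dA' h hh), ← map_mul, ← map_mul, oA c h])
    (fun h hh => cp_anti hr s (dN' h hh).continuousOn fun z _ => by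
      rw [mul_smul_comm, smul_mul_assoc, oO z h, smul_neg])
  have hρ : 0 < min r (1 / (8 * τ')) := by positivity
  have hV1 : ∀ z ∈ Metric.ball c (min r (1 / (8 * τ'))), ‖z - c‖ < r ∧ ‖z - c‖ < 1 / (8 * τ') := by
    intro z hz
    rw [mem_ball_iff_norm] at hz
    exact ⟨hz.trans_le (min_le_left _ _), hz.trans_le (min_le_right _ _)⟩
  refine ⟨Metric.ball c (min r (1 / (8 * τ'))), Metric.isOpen_ball, Metric.mem_ball_self hρ,
    fun z hz => hrU (by rw [mem_closedBall_iff_norm]; exact (hV1 z hz).1.le), h₁,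
    ⟨hh₁, min_le_left _ _⟩, fun z h => ev (a h) (z - c), ?_, ?_, ?_, ?_, ?_⟩
  · intro h hh
    refine (ev_diff hτ' hM.le (ba h hh)).comp (by fun_prop) ?_
    intro z hz
    simpa using (hV1 z hz).2
  · intro z hz
    exact ev_cont hτ' hM.le ca ba (hV1 z hz).2
  · exact ⟨M * 2, fun z hz h hh => ev_norm hτ' hM.le (ba h hh) (hV1 z hz).2⟩
  · intro h hh z hz
    have hz' := (hV1 z hz).2
    have bs := bd_C hτ' s
    have e := congrArg (fun b => ev b (z - c)) (oa h hh)
    have e' : -(a h * PowerSeries.C s) = 0 - (a h * PowerSeries.C s) := by rw [zero_sub]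
    have z0 : ev (0 : R⟦X⟧) (z - c) = 0 := by simp [ev]
    simp only [e'] at e
    rw [ev_mul hτ' (norm_nonneg s) hM.le bs (ba h hh) hz', ev_sub hτ' le_rfl (by positivity) Bd.zero
      ((ba h hh).mul hτ'.le hM.le (norm_nonneg s) bs) hz',
      ev_mul hτ' hM.le (norm_nonneg s) (ba h hh) bs hz', ev_C, z0, zero_sub] at e
    exact e
  · intro h hh z hz
    obtain ⟨hz1, hz2⟩ := hV1 z hz
    have e := ev_ode hτ' hM.le hC hη.le (ba h hh) ((bF h hh).mono hτ.le hC hττ' le_rfl)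
      ((bB h hh).mono hτ.le hη.le hττ' le_rfl) ((bN h hh).mono hτ.le hη.le hττ' le_rfl) hz2
      (ra h hh)
    rw [deriv_comp_sub_const (f := ev (a h)), e]
    have hη2 : (0:ℝ) ≤ η / 2 := by positivity
    have bcp : Bd τ C (cp (fun z => A z h) c r) :=
      cp_Bd hr hC hτr fun z hz => bA z (hrU hz) h (hsub hh)
    rw [ev_add hτ' hη2 hη2 ((bB1 h hh).mono hτ.le hη2 hττ' le_rfl)
      ((bB2 h hh).mono hτ.le hη2 hττ' le_rfl) hz2,
      ev_sub hτ' hC (norm_nonneg _) (bcp.mono hτ.le hC hττ' le_rfl) (bd_C hτ' _) hz2, ev_C,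
      cp_coeff_zero hr (dA' h hh), cp_ev hr (dA' h hh) hz1, cp_ev hr (dO' h hh) hz1,
      cp_ev hr (dD' h hh) hz1, cp_ev hr (dN' h hh) hz1]
    simp only [add_sub_cancel]
    simp only [add_mul, mul_add, sub_mul, mul_sub, smul_sub, smul_mul_assoc, mul_smul_comm]
    abel

end ringmain
end aux

section sylvester
open Polynomial

lemma ann_step {V : Type*} [NormedAddCommGroup V] [NormedSpace ℂ V] (T : V →ₗ[ℂ] V)
    (l : List ℂ) (a : ℂ) (v : V)
    (hv : aeval T (((a :: l).map (fun b => X - C b)).prod) v = 0) :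
    aeval T ((l.map (fun b => X - C b)).prod) (T v - a • v) = 0 := by
  rw [List.map_cons, List.prod_cons, mul_comm, map_mul, Module.End.mul_apply] at hv
  simpa [Algebra.algebraMap_eq_smul_one] using hv

lemma sylv_i (B δ : ℝ) (hB : 0 ≤ B) (hδ : 0 < δ) (k : ℕ) :
    ∃ c : ℝ, 0 ≤ c ∧ ∀ {V : Type} [NormedAddCommGroup V] [NormedSpace ℂ V] (T : V →ₗ[ℂ] V)
      (l : List ℂ) (_ : l.length = k) (μ : ℂ)
      (_ : ∀ a ∈ l, δ ≤ ‖μ - a‖) (_ : ∀ a ∈ l, ∀ v, ‖T v - a • v‖ ≤ B * ‖v‖) (v : V),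
      aeval T ((l.map (fun b => X - C b)).prod) v = 0 → ‖v‖ ≤ c * ‖T v - μ • v‖ := by
  induction k with
  | zero =>
    refine ⟨0, le_rfl, ?_⟩
    intro V _ _ T l hl μ _ _ v hv
    obtain rfl := List.length_eq_zero_iff.mp hl
    simp at hv
    simp [hv]
  | succ k ih =>
    obtain ⟨c, hc, ih⟩ := ih
    refine ⟨(c * B + 1) / δ, by positivity, ?_⟩
    intro V _ _ T l hl μ h1 h2 v hv
    obtain ⟨a, l, rfl⟩ := List.exists_cons_of_length_eq_add_one hl
    have h3 := ih T l (by simpa using hl) μ (fun b hb => h1 b (by simp [hb]))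
      (fun b hb => h2 b (by simp [hb])) _ (ann_step T l a v hv)
    have e1 : T (T v - a • v) - μ • (T v - a • v) = T (T v - μ • v) - a • (T v - μ • v) := by
      simp only [map_sub, map_smul, smul_sub, smul_comm μ a]; abel
    rw [e1] at h3
    have h4 := h2 a (by simp) (T v - μ • v)
    have h5 : δ * ‖v‖ ≤ ‖T v - a • v‖ + ‖T v - μ • v‖ := by
      have e2 : (μ - a) • v = (T v - a • v) - (T v - μ • v) := by
        rw [sub_smul]; abel
      calc δ * ‖v‖ ≤ ‖μ - a‖ * ‖v‖ := by have := h1 a (by simp); gcongr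
        _ = ‖(μ - a) • v‖ := (norm_smul _ _).symm
        _ ≤ _ := by rw [e2]; exact norm_sub_le _ _
    have h6 : c * ‖T (T v - μ • v) - a • (T v - μ • v)‖ ≤ c * (B * ‖T v - μ • v‖) := by gcongr
    rw [div_mul_eq_mul_div, le_div_iff₀ hδ]
    linarith

lemma sylv_ii (B c : ℝ) (hB : 0 ≤ B) (hc : 0 ≤ c) (k : ℕ) :
    ∃ d : ℝ, 0 ≤ d ∧ ∀ {V : Type} [NormedAddCommGroup V] [NormedSpace ℂ V] (L T : V →ₗ[ℂ] V)
      (_ : ∀ v, L (T v) = T (L v)) (l : List ℂ) (_ : l.length = k)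
      (_ : ∀ a ∈ l, ∀ v, ‖v‖ ≤ c * ‖L v - a • v‖) (_ : ∀ a ∈ l, ∀ v, ‖T v - a • v‖ ≤ B * ‖v‖) (v : V),
      aeval T ((l.map (fun b => X - C b)).prod) v = 0 → ‖v‖ ≤ d * ‖L v - T v‖ := by
  induction k with
  | zero =>
    refine ⟨0, le_rfl, ?_⟩
    intro V _ _ L T _ l hl _ _ v hv
    obtain rfl := List.length_eq_zero_iff.mp hl
    simp at hv
    simp [hv]
  | succ k ih =>
    obtain ⟨d, hd, ih⟩ := ih
    refine ⟨c * (d * B + 1), by positivity, ?_⟩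
    intro V _ _ L T hLT l hl h1 h2 v hv
    obtain ⟨a, l, rfl⟩ := List.exists_cons_of_length_eq_add_one hl
    have h3 := ih L T hLT l (by simpa using hl) (fun b hb => h1 b (by simp [hb]))
      (fun b hb => h2 b (by simp [hb])) _ (ann_step T l a v hv)
    have e1 : L (T v - a • v) - T (T v - a • v) = T (L v - T v) - a • (L v - T v) := by
      simp only [map_sub, map_smul, smul_sub, hLT]; abel
    rw [e1] at h3
    have h4 := h2 a (by simp) (L v - T v)
    have h5 : ‖L v - a • v‖ ≤ ‖T v - a • v‖ + ‖L v - T v‖ := by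
      have e2 : L v - a • v = (T v - a • v) + (L v - T v) := by abel
      rw [e2]; exact norm_add_le _ _
    have h6 : d * ‖T (L v - T v) - a • (L v - T v)‖ ≤ d * (B * ‖L v - T v‖) := by gcongr
    calc ‖v‖ ≤ _ := h1 a (by simp) v
      _ ≤ c * (d * B * ‖L v - T v‖ + ‖L v - T v‖) := by gcongr; linarith
      _ = _ := by ring

lemma charpoly_list {n : ℕ} (A : Matrix (Fin n) (Fin n) ℂ) :
    ∃ l : List ℂ, l.length = n ∧ (∀ a ∈ l, a ∈ spectrum ℂ A) ∧
      aeval A ((l.map (fun b => X - C b)).prod) = 0 := by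
  refine ⟨A.charpoly.roots.toList, ?_, ?_, ?_⟩
  · rw [Multiset.length_toList, ← (IsAlgClosed.splits A.charpoly).natDegree_eq_card_roots,
      Matrix.charpoly_natDegree_eq_dim, Fintype.card_fin]
  · intro a ha
    rw [Matrix.mem_spectrum_iff_isRoot_charpoly]
    exact isRoot_of_mem_roots (Multiset.mem_toList.mp ha)
  · have : ((A.charpoly.roots.toList).map (fun b => X - C b)).prod = A.charpoly := by
      conv_rhs => rw [(IsAlgClosed.splits A.charpoly).eq_prod_roots_of_monic A.charpoly_monic]
      rw [← Multiset.prod_coe, ← Multiset.map_coe, Multiset.coe_toList]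
    rw [this, Matrix.aeval_self_charpoly]

lemma aeval_left {n m : ℕ} (A : Matrix (Fin n) (Fin n) ℂ)
    (L : Matrix (Fin n) (Fin m) ℂ →ₗ[ℂ] Matrix (Fin n) (Fin m) ℂ) (hL : ∀ Y, L Y = A * Y)
    (q : ℂ[X]) : ∀ Y, aeval L q Y = aeval A q * Y := by
  have hp : ∀ k Y, (L ^ k) Y = A ^ k * Y := by
    intro k
    induction k with
    | zero => simp
    | succ k ih => intro Y; rw [pow_succ, Module.End.mul_apply, hL, ih, pow_succ, Matrix.mul_assoc]
  induction q using Polynomial.induction_on' with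
  | add p q hp hq => intro Y; simp [hp, hq, Matrix.add_mul]
  | monomial k a => intro Y; simp [aeval_monomial, hp, Algebra.algebraMap_eq_smul_one]

lemma aeval_right {n m : ℕ} (A : Matrix (Fin n) (Fin n) ℂ)
    (L : Matrix (Fin m) (Fin n) ℂ →ₗ[ℂ] Matrix (Fin m) (Fin n) ℂ) (hL : ∀ Y, L Y = Y * A)
    (q : ℂ[X]) : ∀ Y, aeval L q Y = Y * aeval A q := by
  have hp : ∀ k Y, (L ^ k) Y = Y * A ^ k := by
    intro k
    induction k with
    | zero => simp
    | succ k ih => intro Y; rw [pow_succ, Module.End.mul_apply, hL, ih, pow_succ', Matrix.mul_assoc]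
  induction q using Polynomial.induction_on' with
  | add p q hp hq => intro Y; simp [hp, hq, Matrix.mul_add]
  | monomial k a => intro Y; simp [aeval_monomial, hp, Algebra.algebraMap_eq_smul_one]

lemma bd_aux {V : Type*} [NormedAddCommGroup V] [NormedSpace ℂ V] {w v : V} {b : ℂ} {M N B : ℝ}
    (h1 : ‖w‖ ≤ M * ‖v‖) (h2 : ‖b‖ ≤ N) (h3 : M + N ≤ B) : ‖w - b • v‖ ≤ B * ‖v‖ := by
  calc _ ≤ ‖w‖ + ‖b • v‖ := norm_sub_le _ _
    _ ≤ M * ‖v‖ + N * ‖v‖ := by rw [norm_smul]; gcongr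
    _ = (M + N) * ‖v‖ := by ring
    _ ≤ _ := by gcongr

lemma sylv (n₁ n₂ : ℕ) (M δ : ℝ) (hM : 0 ≤ M) (hδ : 0 < δ) :
    ∃ K : ℝ, 0 ≤ K ∧ ∀ (A₁ : Matrix (Fin n₁) (Fin n₁) ℂ) (A₂ : Matrix (Fin n₂) (Fin n₂) ℂ),
      ‖A₁‖ ≤ M → ‖A₂‖ ≤ M →
      (∀ μ₁ ∈ spectrum ℂ A₁, ∀ μ₂ ∈ spectrum ℂ A₂, δ ≤ ‖μ₁ - μ₂‖) →
      ∀ Y : Matrix (Fin n₂) (Fin n₁) ℂ, ‖Y‖ ≤ K * ‖A₂ * Y - Y * A₁‖ := by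
  set B : ℝ := M + M * (‖(1 : Matrix (Fin n₁) (Fin n₁) ℂ)‖ + ‖(1 : Matrix (Fin n₂) (Fin n₂) ℂ)‖) with hBdef
  have hB : 0 ≤ B := by positivity
  obtain ⟨c, hc, h1⟩ := sylv_i B δ hB hδ n₂
  obtain ⟨d, hd, h2⟩ := sylv_ii B c hB hc n₁
  refine ⟨d, hd, ?_⟩
  intro A₁ A₂ b1 b2 hsep Y
  have := FiniteDimensional.complete ℂ (Matrix (Fin n₁) (Fin n₁) ℂ)
  have := FiniteDimensional.complete ℂ (Matrix (Fin n₂) (Fin n₂) ℂ)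
  obtain ⟨l₁, k1, m1, z1⟩ := charpoly_list A₁
  obtain ⟨l₂, k2, m2, z2⟩ := charpoly_list A₂
  let L : Matrix (Fin n₂) (Fin n₁) ℂ →ₗ[ℂ] Matrix (Fin n₂) (Fin n₁) ℂ :=
    { toFun := fun Y => A₂ * Y
      map_add' := fun Y Z => Matrix.mul_add _ _ _
      map_smul' := fun a Y => by simp }
  let T : Matrix (Fin n₂) (Fin n₁) ℂ →ₗ[ℂ] Matrix (Fin n₂) (Fin n₁) ℂ :=
    { toFun := fun Y => Y * A₁
      map_add' := fun Y Z => Matrix.add_mul _ _ _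
      map_smul' := fun a Y => by simp }
  have hL : ∀ Y, L Y = A₂ * Y := fun _ => rfl
  have hT : ∀ Y, T Y = Y * A₁ := fun _ => rfl
  have hLb : ∀ Y, ‖L Y‖ ≤ M * ‖Y‖ := fun Y =>
    (Matrix.linfty_opNorm_mul A₂ Y).trans (mul_le_mul_of_nonneg_right b2 (norm_nonneg _))
  have hTb : ∀ Y, ‖T Y‖ ≤ M * ‖Y‖ := fun Y =>
    (Matrix.linfty_opNorm_mul Y A₁).trans
      ((mul_le_mul_of_nonneg_left b1 (norm_nonneg _)).trans_eq (mul_comm _ _))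
  refine h2 L T (fun v => by rw [hL, hT, hL, hT, Matrix.mul_assoc]) l₁ k1 ?_ ?_ Y ?_
  · intro a ha v
    refine h1 L l₂ k2 a (fun b hb => hsep a (m1 a ha) b (m2 b hb)) ?_ v ?_
    · intro b hb v
      have i1 : ‖b‖ ≤ M * ‖(1 : Matrix (Fin n₂) (Fin n₂) ℂ)‖ :=
        (spectrum.norm_le_norm_mul_of_mem (m2 b hb)).trans (mul_le_mul_of_nonneg_right b2 (norm_nonneg _))
      refine bd_aux (hLb v) i1 ?_
      rw [hBdef, mul_add]
      linarith [mul_nonneg hM (norm_nonneg (1 : Matrix (Fin n₁) (Fin n₁) ℂ))]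
    · rw [aeval_left A₂ L hL, z2, Matrix.zero_mul]
  · intro b hb v
    have i1 : ‖b‖ ≤ M * ‖(1 : Matrix (Fin n₁) (Fin n₁) ℂ)‖ :=
      (spectrum.norm_le_norm_mul_of_mem (m1 b hb)).trans (mul_le_mul_of_nonneg_right b1 (norm_nonneg _))
    refine bd_aux (hTb v) i1 ?_
    rw [hBdef, mul_add]
    linarith [mul_nonneg hM (norm_nonneg (1 : Matrix (Fin n₂) (Fin n₂) ℂ))]
  · rw [aeval_right A₁ T hT, z1, Matrix.mul_zero]

end sylvester
section invJ
variable {R : Type*} [NormedRing R] [NormedAlgebra ℂ R]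

theorem exists_J [FiniteDimensional ℂ R] (S : Set ℝ) (s : R) (hs : s * s = 1) (a : ℝ → R)
    (ha : ContinuousOn a S) (oa : ∀ h, s * a h = a h * s) {K : ℝ} (hK0 : 0 ≤ K)
    (hK : ∀ h ∈ S, ∀ Y, s * Y = -(Y * s) → ‖Y‖ ≤ K * ‖a h * Y - Y * a h‖) :
    ∃ (J : ℝ → R →L[ℂ] R) (K' : ℝ), (∀ h ∈ S, ‖J h‖ ≤ K') ∧ ContinuousOn J S ∧
      (∀ h ∈ S, ∀ Y, s * J h Y = -(J h Y * s)) ∧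
      (∀ h ∈ S, ∀ Y, s * Y = -(Y * s) → a h * J h Y - J h Y * a h = Y) := by
  have hcR : CompleteSpace R := FiniteDimensional.complete ℂ R
  have hfd : FiniteDimensional ℂ (R →L[ℂ] R) := inferInstance
  have hcE : CompleteSpace (R →L[ℂ] R) := inferInstance
  let sg : R →L[ℂ] R := (ContinuousLinearMap.mul ℂ R s).comp ((ContinuousLinearMap.mul ℂ R).flip s)
  let Po : R →L[ℂ] R := (1 / 2 : ℂ) • (ContinuousLinearMap.id ℂ R - sg)
  let Pd : R →L[ℂ] R := (1 / 2 : ℂ) • (ContinuousLinearMap.id ℂ R + sg)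
  have hPo : ∀ Y, Po Y = (1 / 2 : ℂ) • (Y - s * (Y * s)) := fun Y => rfl
  have hPd : ∀ Y, Pd Y = (1 / 2 : ℂ) • (Y + s * (Y * s)) := fun Y => rfl
  have hod : ∀ Y, Y = Po Y + Pd Y := by
    intro Y
    rw [hPo, hPd, ← smul_add]
    rw [show Y - s * (Y * s) + (Y + s * (Y * s)) = (2 : ℂ) • Y by rw [two_smul]; abel, smul_smul]
    norm_num
  have hss : ∀ Y, s * (s * Y) = Y := fun Y => by rw [← mul_assoc, hs, one_mul]
  have hss' : ∀ Y, Y * s * s = Y := fun Y => by rw [mul_assoc, hs, mul_one]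
  have oPo : ∀ Y, s * Po Y = -(Po Y * s) := by
    intro Y
    rw [hPo, mul_smul_comm, smul_mul_assoc, ← smul_neg, mul_sub, sub_mul, hss]
    rw [show s * (Y * s) * s = s * Y by rw [mul_assoc, hss']]
    congr 1; abel
  have oPd : ∀ Y, s * Pd Y = Pd Y * s := by
    intro Y
    rw [hPd, mul_smul_comm, smul_mul_assoc, mul_add, add_mul, hss]
    rw [show s * (Y * s) * s = s * Y by rw [mul_assoc, hss']]
    congr 1; abel
  have Po_o : ∀ Y, s * Y = -(Y * s) → Po Y = Y := by
    intro Y hY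
    rw [hPo, ← mul_assoc, hY, neg_mul, hss', sub_neg_eq_add, ← two_smul ℂ, smul_smul]
    norm_num
  have Po_d : ∀ Y, s * Y = Y * s → Po Y = 0 := by
    intro Y hY
    rw [hPo, ← mul_assoc, hY, hss', sub_self, smul_zero]
  have Pd_o : ∀ Y, s * Y = -(Y * s) → Pd Y = 0 := by
    intro Y hY
    rw [hPd, ← mul_assoc, hY, neg_mul, hss', add_neg_cancel, smul_zero]
  have Pd_d : ∀ Y, s * Y = Y * s → Pd Y = Y := by
    intro Y hY
    rw [hPd, ← mul_assoc, hY, hss', ← two_smul ℂ, smul_smul]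
    norm_num
  let L : R → R →L[ℂ] R := fun b =>
    ((ContinuousLinearMap.mul ℂ R b) - ((ContinuousLinearMap.mul ℂ R).flip b)) * Po + Pd
  have hL : ∀ b Y, L b Y = b * Po Y - Po Y * b + Pd Y := fun b Y => rfl
  have cL : Continuous L := by
    refine Continuous.add (Continuous.mul (Continuous.sub ?_ ?_) continuous_const) continuous_const
    · exact (ContinuousLinearMap.mul ℂ R).continuous
    · exact (ContinuousLinearMap.mul ℂ R).flip.continuous
  have oc : ∀ h Y, s * (a h * Po Y - Po Y * a h) = -((a h * Po Y - Po Y * a h) * s) := by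
    intro h Y
    have e := oPo Y
    rw [mul_sub, sub_mul, ← mul_assoc, oa, mul_assoc, e, ← mul_assoc, e]
    rw [mul_neg, neg_mul, mul_assoc (Po Y) s, oa]
    simp only [mul_assoc]; abel
  have PoL : ∀ h Y, Po (L (a h) Y) = a h * Po Y - Po Y * a h := by
    intro h Y
    rw [hL, map_add, Po_o _ (oc h Y), Po_d _ (oPd Y), add_zero]
  have PdL : ∀ h Y, Pd (L (a h) Y) = Pd Y := by
    intro h Y
    rw [hL, map_add, Pd_o _ (oc h Y), Pd_d _ (oPd Y), zero_add]
  set K₁ := K * ‖Po‖ + ‖Pd‖ with hK₁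
  have hK₁0 : 0 ≤ K₁ := by positivity
  have bd : ∀ h ∈ S, ∀ Y, ‖Y‖ ≤ K₁ * ‖L (a h) Y‖ := by
    intro h hh Y
    calc ‖Y‖ = ‖Po Y + Pd Y‖ := by rw [← hod]
      _ ≤ ‖Po Y‖ + ‖Pd Y‖ := norm_add_le _ _
      _ ≤ K * ‖Po (L (a h) Y)‖ + ‖Pd (L (a h) Y)‖ := by
          rw [PoL, PdL]; gcongr; exact hK h hh _ (oPo Y)
      _ ≤ K * (‖Po‖ * ‖L (a h) Y‖) + ‖Pd‖ * ‖L (a h) Y‖ := by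
          gcongr
          · exact Po.le_opNorm _
          · exact Pd.le_opNorm _
      _ = _ := by rw [hK₁]; ring
  have hu : ∀ h ∈ S, IsUnit (L (a h)) := by
    intro h hh
    have inj : Function.Injective (L (a h)) := by
      rw [injective_iff_map_eq_zero]
      intro Y hY
      have := bd h hh Y
      rw [hY, norm_zero, mul_zero] at this
      exact norm_le_zero_iff.mp this
    let e := (LinearEquiv.ofInjectiveEndo (L (a h) : R →ₗ[ℂ] R) inj).toContinuousLinearEquiv
    rw [ContinuousLinearMap.isUnit_iff_bijective]
    exact ⟨inj, e.surjective⟩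
  have hr : ∀ h ∈ S, ∀ Y, L (a h) (Ring.inverse (L (a h)) Y) = Y := by
    intro h hh Y
    have := congrArg (fun F : R →L[ℂ] R => F Y) (Ring.mul_inverse_cancel _ (hu h hh))
    simpa using this
  refine ⟨fun h => Po * Ring.inverse (L (a h)), ‖Po‖ * K₁, ?_, ?_, ?_, ?_⟩
  · intro h hh
    refine (norm_mul_le _ _).trans ?_
    gcongr
    refine ContinuousLinearMap.opNorm_le_bound _ hK₁0 fun Y => ?_
    have := bd h hh (Ring.inverse (L (a h)) Y)
    rwa [hr h hh] at this
  · intro h hh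
    refine ContinuousWithinAt.mul continuousWithinAt_const ?_
    obtain ⟨u, hu'⟩ := hu h hh
    have := NormedRing.inverse_continuousAt u
    rw [hu'] at this
    exact ContinuousAt.comp_continuousWithinAt (f := fun h => L (a h)) this
      (ContinuousAt.comp_continuousWithinAt (f := a) cL.continuousAt (ha h hh))
  · intro h hh Y
    exact oPo _
  · intro h hh Y hY
    have := PoL h (Ring.inverse (L (a h)) Y)
    rw [hr h hh, Po_o Y hY] at this
    exact this.symm

end invJ
section final

lemma ring_fin {R : Type*} [Ring R] [Algebra ℂ R] (h : ℂ) (p : ℕ) (X' X A D O : R)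
    (e : h • X' = A * X - X * A + O + h ^ p • (D * X - X * D) - h ^ (2 * p) • (X * O * X)) :
    h • (h ^ p • X') = (A + h ^ p • (D + O)) * (1 + h ^ p • X)
      - (1 + h ^ p • X) * (A + h ^ p • (D + h ^ p • (O * X))) := by
  rw [smul_comm, e, mul_comm 2 p, pow_mul]
  simp only [mul_add, add_mul, mul_one, one_mul, smul_mul_assoc, mul_smul_comm, smul_add, smul_sub,
    smul_smul, mul_assoc]
  module

variable {n₁ n₂ : ℕ}

lemma off_iff (Y : Matrix (Fin n₁ ⊕ Fin n₂) (Fin n₁ ⊕ Fin n₂) ℂ) :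
    Matrix.fromBlocks 1 0 0 (-1) * Y = -(Y * Matrix.fromBlocks 1 0 0 (-1)) ↔
      Y.toBlocks₁₁ = 0 ∧ Y.toBlocks₂₂ = 0 := by
  obtain ⟨a, b, c, d, rfl⟩ : ∃ a b c d, Y = Matrix.fromBlocks a b c d :=
    ⟨_, _, _, _, (Matrix.fromBlocks_toBlocks Y).symm⟩
  simp only [Matrix.fromBlocks_multiply, Matrix.fromBlocks_neg, Matrix.fromBlocks_inj,
    Matrix.toBlocks_fromBlocks₁₁, Matrix.toBlocks_fromBlocks₂₂]
  have key : ∀ {k : ℕ} (x : Matrix (Fin k) (Fin k) ℂ), x = -x → x = 0 := by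
    intro k x hx
    ext i j
    have := congrFun (congrFun hx i) j
    exact self_eq_neg.mp this
  simp only [Matrix.one_mul, Matrix.zero_mul, Matrix.mul_one, Matrix.mul_zero, Matrix.neg_mul,
    Matrix.mul_neg, add_zero, zero_add, neg_neg, true_and]
  constructor
  · rintro ⟨h1, h2⟩
    exact ⟨key a h1, key d (by simpa using h2.symm)⟩
  · rintro ⟨rfl, rfl⟩
    simp

lemma lin_bd {V W : Type*} [NormedAddCommGroup V] [NormedSpace ℂ V] [FiniteDimensional ℂ V]
    [NormedAddCommGroup W] [NormedSpace ℂ W] (f : V →ₗ[ℂ] W) :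
    ∃ c : ℝ, 0 ≤ c ∧ ∀ x b, ‖x‖ ≤ b → ‖f x‖ ≤ c * b :=
  ⟨‖LinearMap.toContinuousLinearMap f‖, norm_nonneg _, fun _ _ hx =>
    (LinearMap.toContinuousLinearMap f).le_opNorm_of_le hx⟩

theorem exists_clm : ∃ (π₁₁ : Matrix (Fin n₁ ⊕ Fin n₂) (Fin n₁ ⊕ Fin n₂) ℂ →L[ℂ] Matrix (Fin n₁) (Fin n₁) ℂ)
    (π₁₂ : Matrix (Fin n₁ ⊕ Fin n₂) (Fin n₁ ⊕ Fin n₂) ℂ →L[ℂ] Matrix (Fin n₁) (Fin n₂) ℂ)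
    (π₂₁ : Matrix (Fin n₁ ⊕ Fin n₂) (Fin n₁ ⊕ Fin n₂) ℂ →L[ℂ] Matrix (Fin n₂) (Fin n₁) ℂ)
    (π₂₂ : Matrix (Fin n₁ ⊕ Fin n₂) (Fin n₁ ⊕ Fin n₂) ℂ →L[ℂ] Matrix (Fin n₂) (Fin n₂) ℂ)
    (j₁₁ : Matrix (Fin n₁) (Fin n₁) ℂ →L[ℂ] Matrix (Fin n₁ ⊕ Fin n₂) (Fin n₁ ⊕ Fin n₂) ℂ)
    (j₁₂ : Matrix (Fin n₁) (Fin n₂) ℂ →L[ℂ] Matrix (Fin n₁ ⊕ Fin n₂) (Fin n₁ ⊕ Fin n₂) ℂ)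
    (j₂₁ : Matrix (Fin n₂) (Fin n₁) ℂ →L[ℂ] Matrix (Fin n₁ ⊕ Fin n₂) (Fin n₁ ⊕ Fin n₂) ℂ)
    (j₂₂ : Matrix (Fin n₂) (Fin n₂) ℂ →L[ℂ] Matrix (Fin n₁ ⊕ Fin n₂) (Fin n₁ ⊕ Fin n₂) ℂ),
    (∀ Y, π₁₁ Y = Y.toBlocks₁₁) ∧ (∀ Y, π₁₂ Y = Y.toBlocks₁₂) ∧ (∀ Y, π₂₁ Y = Y.toBlocks₂₁) ∧
    (∀ Y, π₂₂ Y = Y.toBlocks₂₂) ∧ (∀ Y, j₁₁ Y = Matrix.fromBlocks Y 0 0 0) ∧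
    (∀ Y, j₁₂ Y = Matrix.fromBlocks 0 Y 0 0) ∧ (∀ Y, j₂₁ Y = Matrix.fromBlocks 0 0 Y 0) ∧
    (∀ Y, j₂₂ Y = Matrix.fromBlocks 0 0 0 Y) := by
  refine ⟨LinearMap.toContinuousLinearMap ⟨⟨fun Y => Y.toBlocks₁₁, fun _ _ => rfl⟩, fun _ _ => rfl⟩,
    LinearMap.toContinuousLinearMap ⟨⟨fun Y => Y.toBlocks₁₂, fun _ _ => rfl⟩, fun _ _ => rfl⟩,
    LinearMap.toContinuousLinearMap ⟨⟨fun Y => Y.toBlocks₂₁, fun _ _ => rfl⟩, fun _ _ => rfl⟩,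
    LinearMap.toContinuousLinearMap ⟨⟨fun Y => Y.toBlocks₂₂, fun _ _ => rfl⟩, fun _ _ => rfl⟩,
    LinearMap.toContinuousLinearMap ⟨⟨fun Y => Matrix.fromBlocks Y 0 0 0, fun _ _ => ?_⟩, fun _ _ => ?_⟩,
    LinearMap.toContinuousLinearMap ⟨⟨fun Y => Matrix.fromBlocks 0 Y 0 0, fun _ _ => ?_⟩, fun _ _ => ?_⟩,
    LinearMap.toContinuousLinearMap ⟨⟨fun Y => Matrix.fromBlocks 0 0 Y 0, fun _ _ => ?_⟩, fun _ _ => ?_⟩,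
    LinearMap.toContinuousLinearMap ⟨⟨fun Y => Matrix.fromBlocks 0 0 0 Y, fun _ _ => ?_⟩, fun _ _ => ?_⟩,
    fun _ => rfl, fun _ => rfl, fun _ => rfl, fun _ => rfl, fun _ => rfl, fun _ => rfl, fun _ => rfl,
    fun _ => rfl⟩ <;>
  simp [Matrix.fromBlocks_add, Matrix.fromBlocks_smul]

end final

/-- **Exact local block-diagonalization at a finite point** (Theorem 1.4 / Wasow).
Consider `h W' = blockdiag(A₁₁,A₂₂) W + h^p Θ W`, `p ≥ 1`, with `A₁₁, A₂₂, Θ` uniformly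
analytic in `x` on a complex neighborhood `U` of `x_* ∈ ℝ` and continuous in `h` on `(0,h₀]`,
and with `A₁₁(x_*,h)`, `A₂₂(x_*,h)` having no eigenvalues in common, uniformly in `h`.
Then there is a coordinate change `W = T(x,h) Z`, `T = [[I, h^p α₁₂],[h^p α₂₁, I]]`, with
`h Z' = blockdiag(A₁₁ + h^p β₁₁, A₂₂ + h^p β₂₂) Z`; the `α`'s and `β`'s are uniformly
analytic in `x` on a smaller complex neighborhood `V` of `x_*`, continuous in `h` near
`h = 0`, and uniformly bounded as `h → 0⁺`.  The conversion is expressed by the coefficient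
identity `h T' = 𝒜 T − T D` on `V`, where `𝒜 = blockdiag(A₁₁,A₂₂) + h^p Θ` and
`D = blockdiag(A₁₁ + h^p β₁₁, A₂₂ + h^p β₂₂)`. -/
theorem exact_local_block_diagonalization
    (n₁ n₂ : ℕ) (p : ℕ) (hp : 1 ≤ p) (h₀ : ℝ) (hh₀ : 0 < h₀)
    (xstar : ℝ) (U : Set ℂ) (hU : IsOpen U) (hxU : (xstar : ℂ) ∈ U)
    (A₁ : ℂ → ℝ → Matrix (Fin n₁) (Fin n₁) ℂ) (A₂ : ℂ → ℝ → Matrix (Fin n₂) (Fin n₂) ℂ)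
    (Θ : ℂ → ℝ → Matrix (Fin n₁ ⊕ Fin n₂) (Fin n₁ ⊕ Fin n₂) ℂ)
    -- analyticity in x, uniformly in h
    (hanal : ∀ h ∈ Ioc (0:ℝ) h₀, DifferentiableOn ℂ (fun z => A₁ z h) U ∧
      DifferentiableOn ℂ (fun z => A₂ z h) U ∧ DifferentiableOn ℂ (fun z => Θ z h) U)
    (hbd : ∃ C : ℝ, ∀ z ∈ U, ∀ h ∈ Ioc (0:ℝ) h₀, ‖A₁ z h‖ ≤ C ∧ ‖A₂ z h‖ ≤ C ∧ ‖Θ z h‖ ≤ C)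
    -- continuity in h
    (hcont : ∀ z ∈ U, ContinuousOn (fun h => (A₁ z h, A₂ z h, Θ z h)) (Ioc 0 h₀))
    -- no eigenvalues in common, uniformly in h
    (hsep : ∃ δ : ℝ, 0 < δ ∧ ∀ h ∈ Ioc (0:ℝ) h₀,
      ∀ μ₁ ∈ spectrum ℂ (A₁ (xstar : ℂ) h), ∀ μ₂ ∈ spectrum ℂ (A₂ (xstar : ℂ) h),
        δ ≤ ‖μ₁ - μ₂‖) :
    ∃ (V : Set ℂ), IsOpen V ∧ (xstar : ℂ) ∈ V ∧ V ⊆ U ∧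
    ∃ h₁ ∈ Ioc (0:ℝ) h₀,
    ∃ (α₁₂ : ℂ → ℝ → Matrix (Fin n₁) (Fin n₂) ℂ)
      (α₂₁ : ℂ → ℝ → Matrix (Fin n₂) (Fin n₁) ℂ)
      (β₁₁ : ℂ → ℝ → Matrix (Fin n₁) (Fin n₁) ℂ)
      (β₂₂ : ℂ → ℝ → Matrix (Fin n₂) (Fin n₂) ℂ),
      -- uniform analyticity in x, continuity in h, uniform boundedness
      (∀ h ∈ Ioc (0:ℝ) h₁, DifferentiableOn ℂ (fun z => α₁₂ z h) V ∧
        DifferentiableOn ℂ (fun z => α₂₁ z h) V ∧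
        DifferentiableOn ℂ (fun z => β₁₁ z h) V ∧
        DifferentiableOn ℂ (fun z => β₂₂ z h) V) ∧
      (∀ z ∈ V, ContinuousOn (fun h => (α₁₂ z h, α₂₁ z h, β₁₁ z h, β₂₂ z h)) (Ioc 0 h₁)) ∧
      (∃ C : ℝ, ∀ z ∈ V, ∀ h ∈ Ioc (0:ℝ) h₁,
        ‖α₁₂ z h‖ ≤ C ∧ ‖α₂₁ z h‖ ≤ C ∧ ‖β₁₁ z h‖ ≤ C ∧ ‖β₂₂ z h‖ ≤ C) ∧
      -- the conjugation identity  h T' = 𝒜 T − T D  on V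
      (∀ h ∈ Ioc (0:ℝ) h₁, ∀ z ∈ V,
        (h : ℂ) • deriv
            (fun w => Matrix.fromBlocks 1 ((h : ℂ) ^ p • α₁₂ w h)
              ((h : ℂ) ^ p • α₂₁ w h) 1) z
          = (Matrix.fromBlocks (A₁ z h) 0 0 (A₂ z h) + (h : ℂ) ^ p • Θ z h)
              * Matrix.fromBlocks 1 ((h : ℂ) ^ p • α₁₂ z h) ((h : ℂ) ^ p • α₂₁ z h) 1
            - (Matrix.fromBlocks 1 ((h : ℂ) ^ p • α₁₂ z h) ((h : ℂ) ^ p • α₂₁ z h) 1)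
              * Matrix.fromBlocks (A₁ z h + (h : ℂ) ^ p • β₁₁ z h) 0 0
                  (A₂ z h + (h : ℂ) ^ p • β₂₂ z h)) := by
  obtain ⟨M, hM⟩ := hbd
  obtain ⟨δ, hδ, hsep⟩ := hsep
  have hM0 : 0 ≤ M := (norm_nonneg _).trans (hM _ hxU h₀ ⟨hh₀, le_rfl⟩).1
  obtain ⟨π₁₁, π₁₂, π₂₁, π₂₂, j₁₁, j₁₂, j₂₁, j₂₂, hπ₁₁, hπ₁₂, hπ₂₁, hπ₂₂, hj₁₁, hj₁₂, hj₂₁, hj₂₂⟩ :=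
    exists_clm (n₁ := n₁) (n₂ := n₂)
  obtain ⟨K₁, hK₁, sy₁⟩ := sylv n₁ n₂ M δ hM0 hδ
  obtain ⟨K₂, hK₂, sy₂⟩ := sylv n₂ n₁ M δ hM0 hδ
  obtain ⟨s, hs⟩ : ∃ s : Matrix (Fin n₁ ⊕ Fin n₂) (Fin n₁ ⊕ Fin n₂) ℂ,
    s = Matrix.fromBlocks 1 0 0 (-1) := ⟨_, rfl⟩
  have hss : s * s = 1 := by
    rw [hs, Matrix.fromBlocks_multiply]; simp
  let A : ℂ → ℝ → Matrix (Fin n₁ ⊕ Fin n₂) (Fin n₁ ⊕ Fin n₂) ℂ :=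
    fun z h => j₁₁ (A₁ z h) + j₂₂ (A₂ z h)
  let D : ℂ → ℝ → Matrix (Fin n₁ ⊕ Fin n₂) (Fin n₁ ⊕ Fin n₂) ℂ :=
    fun z h => (j₁₁.comp π₁₁ + j₂₂.comp π₂₂) (Θ z h)
  let O : ℂ → ℝ → Matrix (Fin n₁ ⊕ Fin n₂) (Fin n₁ ⊕ Fin n₂) ℂ :=
    fun z h => (j₁₂.comp π₁₂ + j₂₁.comp π₂₁) (Θ z h)
  have eA : ∀ z h, A z h = Matrix.fromBlocks (A₁ z h) 0 0 (A₂ z h) := by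
    intro z h
    change j₁₁ (A₁ z h) + j₂₂ (A₂ z h) = _
    rw [hj₁₁, hj₂₂, Matrix.fromBlocks_add]; simp
  have eD : ∀ z h, D z h = Matrix.fromBlocks (Θ z h).toBlocks₁₁ 0 0 (Θ z h).toBlocks₂₂ := by
    intro z h
    change j₁₁ (π₁₁ (Θ z h)) + j₂₂ (π₂₂ (Θ z h)) = _
    rw [hj₁₁, hj₂₂, hπ₁₁, hπ₂₂, Matrix.fromBlocks_add]; simp
  have eO : ∀ z h, O z h = Matrix.fromBlocks 0 (Θ z h).toBlocks₁₂ (Θ z h).toBlocks₂₁ 0 := by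
    intro z h
    change j₁₂ (π₁₂ (Θ z h)) + j₂₁ (π₂₁ (Θ z h)) = _
    rw [hj₁₂, hj₂₁, hπ₁₂, hπ₂₁, Matrix.fromBlocks_add]; simp
  have eT : ∀ z h, Θ z h = D z h + O z h := by
    intro z h
    rw [eD, eO, Matrix.fromBlocks_add]
    simp [Matrix.fromBlocks_toBlocks]
  have oA : ∀ z h, s * A z h = A z h * s := by
    intro z h
    rw [eA, hs, Matrix.fromBlocks_multiply, Matrix.fromBlocks_multiply]; simp
  have oD : ∀ z h, s * D z h = D z h * s := by
    intro z h
    rw [eD, hs, Matrix.fromBlocks_multiply, Matrix.fromBlocks_multiply]; simp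
  have oO : ∀ z h, s * O z h = -(O z h * s) := by
    intro z h
    rw [hs, off_iff, eO]; simp
  have dA : ∀ h ∈ Ioc 0 h₀, DifferentiableOn ℂ (fun z => A z h) U := fun h hh =>
    (j₁₁.differentiable.comp_differentiableOn (hanal h hh).1).add
      (j₂₂.differentiable.comp_differentiableOn (hanal h hh).2.1)
  have dD : ∀ h ∈ Ioc 0 h₀, DifferentiableOn ℂ (fun z => D z h) U := fun h hh =>
    (j₁₁.comp π₁₁ + j₂₂.comp π₂₂).differentiable.comp_differentiableOn (hanal h hh).2.2
  have dO : ∀ h ∈ Ioc 0 h₀, DifferentiableOn ℂ (fun z => O z h) U := fun h hh =>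
    (j₁₂.comp π₁₂ + j₂₁.comp π₂₁).differentiable.comp_differentiableOn (hanal h hh).2.2
  have cA : ∀ z ∈ U, ContinuousOn (fun h => A z h) (Ioc 0 h₀) := fun z hz =>
    (j₁₁.continuous.comp_continuousOn (hcont z hz).fst).add
      (j₂₂.continuous.comp_continuousOn (hcont z hz).snd.fst)
  have cD : ∀ z ∈ U, ContinuousOn (fun h => D z h) (Ioc 0 h₀) := fun z hz =>
    (j₁₁.comp π₁₁ + j₂₂.comp π₂₂).continuous.comp_continuousOn (hcont z hz).snd.snd
  have cO : ∀ z ∈ U, ContinuousOn (fun h => O z h) (Ioc 0 h₀) := fun z hz =>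
    (j₁₂.comp π₁₂ + j₂₁.comp π₂₁).continuous.comp_continuousOn (hcont z hz).snd.snd
  obtain ⟨cπ₁₁, pπ₁₁, bπ₁₁⟩ := lin_bd π₁₁.toLinearMap
  obtain ⟨cπ₁₂, pπ₁₂, bπ₁₂⟩ := lin_bd π₁₂.toLinearMap
  obtain ⟨cπ₂₁, pπ₂₁, bπ₂₁⟩ := lin_bd π₂₁.toLinearMap
  obtain ⟨cπ₂₂, pπ₂₂, bπ₂₂⟩ := lin_bd π₂₂.toLinearMap
  obtain ⟨cj₁₁, pj₁₁, bj₁₁⟩ := lin_bd j₁₁.toLinearMap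
  obtain ⟨cj₁₂, pj₁₂, bj₁₂⟩ := lin_bd j₁₂.toLinearMap
  obtain ⟨cj₂₁, pj₂₁, bj₂₁⟩ := lin_bd j₂₁.toLinearMap
  obtain ⟨cj₂₂, pj₂₂, bj₂₂⟩ := lin_bd j₂₂.toLinearMap
  obtain ⟨cd, pd, bd⟩ := lin_bd (j₁₁.comp π₁₁ + j₂₂.comp π₂₂).toLinearMap
  obtain ⟨co, po, bo⟩ := lin_bd (j₁₂.comp π₁₂ + j₂₁.comp π₂₁).toLinearMap
  set C₁ : ℝ := cj₁₁ * M + cj₂₂ * M with hC₁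
  set C₂ : ℝ := cd * M with hC₂
  set C₃ : ℝ := co * M with hC₃
  have hC₁0 : 0 ≤ C₁ := by positivity
  have hC₂0 : 0 ≤ C₂ := by positivity
  have hC₃0 : 0 ≤ C₃ := by positivity
  have bA : ∀ z ∈ U, ∀ h ∈ Ioc 0 h₀, ‖A z h‖ ≤ C₁ + C₂ + C₃ := by
    intro z hz h hh
    have i1 : ‖j₁₁ (A₁ z h)‖ ≤ _ := bj₁₁ _ _ (hM z hz h hh).1
    have i2 : ‖j₂₂ (A₂ z h)‖ ≤ _ := bj₂₂ _ _ (hM z hz h hh).2.1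
    have i3 : ‖A z h‖ ≤ ‖j₁₁ (A₁ z h)‖ + ‖j₂₂ (A₂ z h)‖ := norm_add_le _ _
    linarith
  have bD : ∀ z ∈ U, ∀ h ∈ Ioc 0 h₀, ‖D z h‖ ≤ C₁ + C₂ + C₃ := by
    intro z hz h hh
    have i1 : ‖D z h‖ ≤ C₂ :=
      bd _ _ (hM z hz h hh).2.2
    linarith
  have bO : ∀ z ∈ U, ∀ h ∈ Ioc 0 h₀, ‖O z h‖ ≤ C₁ + C₂ + C₃ := by
    intro z hz h hh
    have i1 : ‖O z h‖ ≤ C₃ :=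
      bo _ _ (hM z hz h hh).2.2
    linarith
  have hoff : ∀ Y, s * Y = -(Y * s) → Y = Matrix.fromBlocks 0 (π₁₂ Y) (π₂₁ Y) 0 := by
    intro Y hY
    rw [hs, off_iff] at hY
    rw [hπ₁₂, hπ₂₁]
    conv_lhs => rw [← Matrix.fromBlocks_toBlocks Y, hY.1, hY.2]
  have key : ∀ h ∈ Ioc 0 h₀, ∀ Y, s * Y = -(Y * s) →
      ‖Y‖ ≤ (cj₁₂ * (K₂ * cπ₁₂) + cj₂₁ * (K₁ * cπ₂₁)) *
        ‖A (xstar : ℂ) h * Y - Y * A (xstar : ℂ) h‖ := by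
    intro h hh Y hY
    have e := hoff Y hY
    have e1 : Y = j₁₂ (π₁₂ Y) + j₂₁ (π₂₁ Y) := by
      rw [hj₁₂, hj₂₁, Matrix.fromBlocks_add]; simpa using e
    have e2 : A (xstar : ℂ) h * Y - Y * A (xstar : ℂ) h = Matrix.fromBlocks 0
        (A₁ (xstar : ℂ) h * π₁₂ Y - π₁₂ Y * A₂ (xstar : ℂ) h)
        (A₂ (xstar : ℂ) h * π₂₁ Y - π₂₁ Y * A₁ (xstar : ℂ) h) 0 := by
      conv_lhs => rw [e]
      rw [eA, Matrix.fromBlocks_multiply, Matrix.fromBlocks_multiply, sub_eq_add_neg,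
        Matrix.fromBlocks_neg, Matrix.fromBlocks_add]
      simp [sub_eq_add_neg]
    have e3 : π₁₂ (A (xstar : ℂ) h * Y - Y * A (xstar : ℂ) h)
        = A₁ (xstar : ℂ) h * π₁₂ Y - π₁₂ Y * A₂ (xstar : ℂ) h := by
      conv_lhs => rw [e2, hπ₁₂, Matrix.toBlocks_fromBlocks₁₂]
    have e4 : π₂₁ (A (xstar : ℂ) h * Y - Y * A (xstar : ℂ) h)
        = A₂ (xstar : ℂ) h * π₂₁ Y - π₂₁ Y * A₁ (xstar : ℂ) h := by
      conv_lhs => rw [e2, hπ₂₁, Matrix.toBlocks_fromBlocks₂₁]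
    obtain ⟨b1, b2, -⟩ := hM _ hxU h hh
    have i1 := sy₁ _ _ b1 b2 (hsep h hh) (π₂₁ Y)
    have i2 := sy₂ _ _ b2 b1 (fun μ₁ h1 μ₂ h2 => by
      rw [norm_sub_rev]; exact hsep h hh μ₂ h2 μ₁ h1) (π₁₂ Y)
    rw [← e4] at i1
    rw [← e3] at i2
    generalize A (xstar : ℂ) h * Y - Y * A (xstar : ℂ) h = W at i1 i2
    have i3 := i1.trans (mul_le_mul_of_nonneg_left (bπ₂₁ W _ le_rfl) hK₁)
    have i4 := i2.trans (mul_le_mul_of_nonneg_left (bπ₁₂ W _ le_rfl) hK₂)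
    have i5 := bj₁₂ _ _ i4
    have i6 := bj₂₁ _ _ i3
    have i7 : ‖Y‖ ≤ ‖j₁₂ (π₁₂ Y)‖ + ‖j₂₁ (π₂₁ Y)‖ := by
      conv_lhs => rw [e1]
      exact norm_add_le _ _
    refine i7.trans ((add_le_add i5 i6).trans_eq ?_)
    ring
  have hcR : CompleteSpace (Matrix (Fin n₁ ⊕ Fin n₂) (Fin n₁ ⊕ Fin n₂) ℂ) :=
    FiniteDimensional.complete ℂ _
  obtain ⟨J, K', bJ, cJ, oJ, iJ⟩ := exists_J (Ioc 0 h₀) s hss (fun h => A (xstar : ℂ) h)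
    (cA _ hxU) (oA _) (by positivity) key
  obtain ⟨V, hV, hxV, hVU, h₁, hh₁, X, dX, cX, ⟨CX, bX⟩, oX, eX⟩ :=
    ring_main p hp h₀ hh₀ (xstar : ℂ) U hU hxU s A D O dA dD dO bA bD bO cA cD cO oA oD oO
      J bJ cJ oJ iJ
  have hsub : Ioc 0 h₁ ⊆ Ioc 0 h₀ := Ioc_subset_Ioc_right hh₁.2
  let B : ℂ → ℝ → Matrix (Fin n₁ ⊕ Fin n₂) (Fin n₁ ⊕ Fin n₂) ℂ :=
    fun z h => D z h + (h : ℂ) ^ p • (O z h * X z h)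
  have dB : ∀ h ∈ Ioc 0 h₁, DifferentiableOn ℂ (fun z => B z h) V := fun h hh =>
    ((dD h (hsub hh)).mono hVU).add
      ((((dO h (hsub hh)).mono hVU).mul (dX h hh)).fun_const_smul _)
  have cB : ∀ z ∈ V, ContinuousOn (fun h => B z h) (Ioc 0 h₁) := fun z hz =>
    ((cD z (hVU hz)).mono hsub).add (ContinuousOn.smul (f := fun h : ℝ => (h : ℂ) ^ p) (by fun_prop)
      (((cO z (hVU hz)).mono hsub).mul (cX z hz)))
  set C := C₁ + C₂ + C₃ with hC
  have hC0 : 0 ≤ C := by positivity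
  have bB : ∀ z ∈ V, ∀ h ∈ Ioc 0 h₁, ‖B z h‖ ≤ C + h₁ ^ p * (C * CX) := by
    intro z hz h hh
    have i1 := bD z (hVU hz) h (hsub hh)
    have i2 := bO z (hVU hz) h (hsub hh)
    have i3 := bX z hz h hh
    have i4 : ‖(h : ℂ) ^ p‖ ≤ h₁ ^ p := by
      rw [norm_pow, Complex.norm_real, Real.norm_eq_abs, abs_of_pos hh.1]
      exact pow_le_pow_left₀ hh.1.le hh.2 p
    have i5 : ‖O z h * X z h‖ ≤ C * CX :=
      (norm_mul_le _ _).trans (mul_le_mul i2 i3 (norm_nonneg _) hC0)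
    have i6 : ‖(h : ℂ) ^ p • (O z h * X z h)‖ ≤ h₁ ^ p * (C * CX) := by
      rw [norm_smul]
      exact mul_le_mul i4 i5 (norm_nonneg _) (pow_nonneg hh₁.1.le _)
    exact (norm_add_le _ _).trans (add_le_add i1 i6)
  refine ⟨V, hV, hxV, hVU, h₁, hh₁, fun z h => π₁₂ (X z h), fun z h => π₂₁ (X z h),
    fun z h => π₁₁ (B z h), fun z h => π₂₂ (B z h), ?_, ?_, ?_, ?_⟩
  · intro h hh
    exact ⟨π₁₂.differentiable.comp_differentiableOn (dX h hh),
      π₂₁.differentiable.comp_differentiableOn (dX h hh),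
      π₁₁.differentiable.comp_differentiableOn (dB h hh),
      π₂₂.differentiable.comp_differentiableOn (dB h hh)⟩
  · intro z hz
    exact (π₁₂.continuous.comp_continuousOn (cX z hz)).prodMk
      ((π₂₁.continuous.comp_continuousOn (cX z hz)).prodMk
      ((π₁₁.continuous.comp_continuousOn (cB z hz)).prodMk
      (π₂₂.continuous.comp_continuousOn (cB z hz))))
  · refine ⟨max (max (cπ₁₂ * CX) (cπ₂₁ * CX)) (max (cπ₁₁ * (C + h₁ ^ p * (C * CX)))
      (cπ₂₂ * (C + h₁ ^ p * (C * CX)))), fun z hz h hh => ⟨?_, ?_, ?_, ?_⟩⟩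
    · exact (bπ₁₂ _ _ (bX z hz h hh)).trans
        ((le_max_left _ _).trans (le_max_left _ _))
    · exact (bπ₂₁ _ _ (bX z hz h hh)).trans
        ((le_max_right _ _).trans (le_max_left _ _))
    · exact (bπ₁₁ _ _ (bB z hz h hh)).trans
        ((le_max_left _ _).trans (le_max_right _ _))
    · exact (bπ₂₂ _ _ (bB z hz h hh)).trans
        ((le_max_right _ _).trans (le_max_right _ _))
  · intro h hh z hz
    have hT : ∀ w ∈ V, Matrix.fromBlocks 1 ((h : ℂ) ^ p • π₁₂ (X w h))
        ((h : ℂ) ^ p • π₂₁ (X w h)) 1 = 1 + (h : ℂ) ^ p • X w h := by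
      intro w hw
      conv_rhs => rw [hoff _ (oX h hh w hw), ← Matrix.fromBlocks_one, Matrix.fromBlocks_smul,
        Matrix.fromBlocks_add]
      simp
    have hB : Matrix.fromBlocks (A₁ z h + (h : ℂ) ^ p • π₁₁ (B z h)) 0 0
                  (A₂ z h + (h : ℂ) ^ p • π₂₂ (B z h)) = A z h + (h : ℂ) ^ p • B z h := by
      have e : B z h = Matrix.fromBlocks (π₁₁ (B z h)) 0 0 (π₂₂ (B z h)) := by
        have e1 : B z h = Matrix.fromBlocks
            ((Θ z h).toBlocks₁₁ + (h : ℂ) ^ p • ((Θ z h).toBlocks₁₂ * π₂₁ (X z h))) 0 0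
            ((Θ z h).toBlocks₂₂ + (h : ℂ) ^ p • ((Θ z h).toBlocks₂₁ * π₁₂ (X z h))) := by
          change D z h + (h : ℂ) ^ p • (O z h * X z h) = _
          conv_lhs => rw [hoff _ (oX h hh z hz)]
          rw [eD, eO, Matrix.fromBlocks_multiply, Matrix.fromBlocks_smul, Matrix.fromBlocks_add]
          simp
        rw [hπ₁₁, hπ₂₂, e1, Matrix.toBlocks_fromBlocks₁₁, Matrix.toBlocks_fromBlocks₂₂]
      conv_rhs => rw [e, eA, Matrix.fromBlocks_smul, Matrix.fromBlocks_add]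
      simp
    have hd : deriv (fun w => Matrix.fromBlocks 1 ((h : ℂ) ^ p • π₁₂ (X w h))
        ((h : ℂ) ^ p • π₂₁ (X w h)) 1) z = (h : ℂ) ^ p • deriv (fun w => X w h) z := by
      have e : (fun w => Matrix.fromBlocks 1 ((h : ℂ) ^ p • π₁₂ (X w h))
        ((h : ℂ) ^ p • π₂₁ (X w h)) 1) =ᶠ[nhds z] fun w => 1 + (h : ℂ) ^ p • X w h := by
        filter_upwards [hV.mem_nhds hz] with w hw using hT w hw
      have hx : HasDerivAt (fun w => X w h) (deriv (fun w => X w h) z) z :=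
        ((dX h hh).differentiableAt (hV.mem_nhds hz)).hasDerivAt
      exact (((hx.fun_const_smul ((h : ℂ) ^ p)).const_add 1).congr_of_eventuallyEq e).deriv
    refine Eq.trans (congrArg (fun Y => (h : ℂ) • Y) hd) ?_
    beta_reduce
    rw [hT z hz, hB, eT z h, ← eA]
    exact ring_fin (h : ℂ) p _ _ _ _ _ (eX h hh z hz)
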